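/- arXiv:2109.01027 — 2 statements merged into one kernel-verified Lean document; each statement's English description precedes it below -/
import Mathlib

section
/- There exist ε₀ > 0 and a nondecreasing function φ : (0,1) → (0,1), both depending only on N, Λ and β, such that the following holds: for every ε with 0 < ε < ε₀, every admissible family of measures (ν_x), every Borel set A ⊆ Q₁ with |A| > 0, every x ∈ Q₁, and every process (X_k) as described with X_0 = x, one has P( T_A < τ_{Q_{10√N}} ) > φ(|A|), where T_A = inf{k ≥ 0 : X_k ∈ A} is the hitting time of A and τ_{Q_{10√N}} = inf{k ≥ 0 : X_k ∉ Q_{10√N}} is the exit time from Q_{10√N}. -/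
open MeasureTheory Metric
open scoped ENNReal

noncomputable section

/-- The open axis-parallel cube of side `r` centered at the origin. -/
def cubeO (N : ℕ) (r : ℝ) : Set (EuclideanSpace ℝ (Fin N)) :=
  {x | ∀ i, |x i| < r / 2}

abbrev EN (N : ℕ) := EuclideanSpace ℝ (Fin N)

/-- uniform probability measure on the unit ball -/
def uB (N : ℕ) : Measure (EN N) :=
  (volume (ball (0 : EN N) 1))⁻¹ • volume.restrict (ball (0 : EN N) 1)

structure AdmM (N : ℕ) (Λ β : ℝ) (ρ : Measure (EN N)) : Prop where
  prob : IsProbabilityMeasure ρ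
  supp : ρ (closedBall (0 : EN N) Λ)ᶜ = 0
  symm : ρ.IsNegInvariant
  lower : ENNReal.ofReal β • uB N ≤ ρ

lemma vol_pre {N : ℕ} {ε : ℝ} (hε : 0 < ε) (x : EN N) (T : Set (EN N)) :
    volume ((fun z : EN N => x + ε • z) ⁻¹' T) = ENNReal.ofReal ((ε ^ N)⁻¹) * volume T := by
  have h1 : ((fun z : EN N => x + ε • z) ⁻¹' T)
      = (fun z : EN N => ε • z) ⁻¹' ((fun y => x + y) ⁻¹' T) := rfl
  rw [h1, Measure.addHaar_preimage_smul _ hε.ne', measure_preimage_add]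
  simp only [finrank_euclideanSpace, Fintype.card_fin]
  rw [abs_of_pos (by positivity)]

lemma pre_ball {N : ℕ} {ε : ℝ} (hε : 0 < ε) (x y : EN N) (r : ℝ) :
    (fun z : EN N => x + ε • z) ⁻¹' (ball (x + ε • y) (ε * r)) = ball y r := by
  ext z
  simp only [Set.mem_preimage, mem_ball, dist_add_left, dist_smul₀, Real.norm_eq_abs, abs_of_pos hε]
  exact mul_lt_mul_iff_right₀ hε

lemma vol_ball {N : ℕ} {ε : ℝ} (hε : 0 < ε) (x : EN N) :
    volume (ball x ε) = ENNReal.ofReal (ε ^ N) * volume (ball (0 : EN N) 1) := by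
  have h := vol_pre hε x (ball x ε)
  have h2 := pre_ball hε x 0 1
  simp only [smul_zero, add_zero, mul_one] at h2
  rw [h2] at h
  rw [h, ← mul_assoc, ← ENNReal.ofReal_mul (by positivity), mul_inv_cancel₀ (by positivity)]
  simp

lemma vB_pos {N : ℕ} : volume (ball (0 : EN N) 1) ≠ 0 :=
  (measure_ball_pos _ _ one_pos).ne'
lemma vB_top {N : ℕ} : volume (ball (0 : EN N) 1) ≠ ∞ := measure_ball_lt_top.ne

instance uB_prob (N : ℕ) : IsProbabilityMeasure (uB N) := by
  constructor
  simp only [uB, Measure.smul_apply, Measure.restrict_apply_univ, smul_eq_mul]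
  exact ENNReal.inv_mul_cancel vB_pos vB_top

lemma meas_aff {N : ℕ} (ε : ℝ) (x : EN N) : Measurable (fun z : EN N => x + ε • z) := by
  fun_prop

lemma uB_map {N : ℕ} {ε : ℝ} (hε : 0 < ε) (x : EN N) :
    (uB N).map (fun z => x + ε • z) = (volume (ball x ε))⁻¹ • volume.restrict (ball x ε) := by
  ext s hs
  rw [Measure.map_apply (meas_aff ε x) hs]
  simp only [uB, Measure.smul_apply, smul_eq_mul]
  rw [Measure.restrict_apply (meas_aff ε x hs), Measure.restrict_apply hs]
  have h2 := pre_ball hε x 0 1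
  simp only [smul_zero, add_zero, mul_one] at h2
  have h3 : (fun z : EN N => x + ε • z) ⁻¹' s ∩ ball 0 1
      = (fun z : EN N => x + ε • z) ⁻¹' (s ∩ ball x ε) := by rw [Set.preimage_inter, h2]
  rw [h3, vol_pre hε, vol_ball hε, ENNReal.mul_inv, ENNReal.ofReal_inv_of_pos (by positivity)]
  · ring
  · left; simp; positivity
  · left; simp

lemma uB_ball {N : ℕ} {r : ℝ} (hr : 0 < r) (y : EN N) (h : ball y r ⊆ ball 0 1) :
    uB N (ball y r) = ENNReal.ofReal (r ^ N) := by
  simp only [uB, Measure.smul_apply, smul_eq_mul]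
  rw [Measure.restrict_apply measurableSet_ball, Set.inter_eq_left.2 h, vol_ball hr,
    mul_comm, mul_assoc, ENNReal.mul_inv_cancel vB_pos vB_top, mul_one]

lemma uB_lint {N : ℕ} {ε : ℝ} (hε : 0 < ε) (x : EN N) (f : EN N → ℝ≥0∞) (hf : Measurable f) :
    ∫⁻ y in ball x ε, f y = volume (ball x ε) * ∫⁻ z, f (x + ε • z) ∂(uB N) := by
  have h := lintegral_map (μ := uB N) hf (meas_aff ε x)
  rw [← h, uB_map hε, lintegral_smul_measure, smul_eq_mul, ← mul_assoc, ENNReal.mul_inv_cancel, one_mul]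
  · exact (measure_ball_pos _ _ hε).ne'
  · exact measure_ball_lt_top.ne

lemma uB_avg {N : ℕ} {ε : ℝ} (hε : 0 < ε) (x : EN N) (f : EN N → ℝ) (hf : Measurable f) :
    ⨍ y in ball x ε, f y = ∫ z, f (x + ε • z) ∂(uB N) := by
  rw [setAverage_eq', ← uB_map hε, integral_map (meas_aff ε x).aemeasurable hf.aestronglyMeasurable]

lemma AdmM.ae {N : ℕ} {Λ β : ℝ} {ρ : Measure (EN N)} (h : AdmM N Λ β ρ) :
    ∀ᵐ z ∂ρ, ‖z‖ ≤ Λ := by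
  have := h.supp
  rw [← mem_ae_iff] at this
  filter_upwards [this] with z hz
  simpa using hz

lemma AdmM.integrable {N : ℕ} {Λ β : ℝ} {ρ : Measure (EN N)} (h : AdmM N Λ β ρ)
    {g : EN N → ℝ} (hg : Measurable g) {M : ℝ} (hb : ∀ z, ‖z‖ ≤ Λ → |g z| ≤ M) :
    Integrable g ρ := by
  have := h.prob
  refine Integrable.of_bound hg.aestronglyMeasurable M ?_
  filter_upwards [h.ae] with z hz using hb z hz

lemma AdmM.lint_ball {N : ℕ} {Λ β : ℝ} {ρ : Measure (EN N)} (h : AdmM N Λ β ρ) (hβ : 0 < β)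
    {ε : ℝ} (hε : 0 < ε) (x : EN N) {a : EN N → ℝ} (ha : Measurable a)
    (hint : Integrable (fun z => a (x + ε • z)) ρ)
    (h0 : ∀ z, ‖z‖ ≤ Λ → 0 ≤ a (x + ε • z)) {I : ℝ} (hI : ∫ z, a (x + ε • z) ∂ρ ≤ I) :
    ∫⁻ y in ball x ε, ENNReal.ofReal (a y) ≤ ENNReal.ofReal (I / β) * volume (ball x ε) := by
  rw [uB_lint hε x _ ha.ennreal_ofReal, mul_comm]
  gcongr
  have h1 : ENNReal.ofReal β * ∫⁻ z, ENNReal.ofReal (a (x + ε • z)) ∂(uB N) ≤ ENNReal.ofReal I := by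
    calc _ = ∫⁻ z, ENNReal.ofReal (a (x + ε • z)) ∂(ENNReal.ofReal β • uB N) := by
            rw [lintegral_smul_measure, smul_eq_mul]
      _ ≤ ∫⁻ z, ENNReal.ofReal (a (x + ε • z)) ∂ρ := lintegral_mono' h.lower le_rfl
      _ = ENNReal.ofReal (∫ z, a (x + ε • z) ∂ρ) := by
            rw [ofReal_integral_eq_lintegral_ofReal hint]
            filter_upwards [h.ae] with z hz using h0 z hz
      _ ≤ _ := ENNReal.ofReal_le_ofReal hI
  rw [ENNReal.ofReal_div_of_pos hβ, ENNReal.le_div_iff_mul_le, mul_comm]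
  · exact h1
  · left; simpa using hβ
  · left; simp

/-- Markov-type bound. -/
lemma AdmM.markov {N : ℕ} {Λ β : ℝ} {ρ : Measure (EN N)} (h : AdmM N Λ β ρ) (hβ : 0 < β)
    {ε : ℝ} (hε : 0 < ε) (x : EN N) {a : EN N → ℝ} (ha : Measurable a)
    (hint : Integrable (fun z => a (x + ε • z)) ρ)
    (h0 : ∀ z, ‖z‖ ≤ Λ → 0 ≤ a (x + ε • z)) {I : ℝ} (hI : ∫ z, a (x + ε • z) ∂ρ ≤ I)
    {S : Set (EN N)} (hSm : MeasurableSet S) (hS : S ⊆ ball x ε) {t : ℝ} (ht : ∀ y ∈ S, t ≤ a y) :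
    ENNReal.ofReal t * volume S ≤ ENNReal.ofReal (I / β) * volume (ball x ε) := by
  refine le_trans ?_ (h.lint_ball hβ hε x ha hint h0 hI)
  rw [← setLIntegral_const]
  refine le_trans (setLIntegral_mono' hSm fun y hy => ENNReal.ofReal_le_ofReal (ht y hy)) ?_
  exact lintegral_mono_set hS

lemma one_add_sq_le_cosh (t : ℝ) : 1 + t ^ 2 / 2 ≤ Real.cosh t := by
  have h1 : Real.cosh t = 1 + 2 * Real.sinh (t / 2) ^ 2 := by
    have := Real.cosh_two_mul (t / 2)
    rw [Real.cosh_sq] at this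
    rw [show 2 * (t / 2) = t by ring] at this
    rw [this]; ring
  have h2 : (t / 2) ^ 2 ≤ Real.sinh (t / 2) ^ 2 := by
    rw [sq_le_sq]
    rcases le_total 0 (t / 2) with h | h
    · rw [abs_of_nonneg h]; exact (Real.self_le_sinh_iff.2 h).trans (le_abs_self _)
    · rw [abs_of_nonpos h]
      have := Real.sinh_le_self_iff.2 h
      exact le_trans (by linarith) (neg_le_abs _)
  rw [h1]; nlinarith

lemma half_ball_sub {N : ℕ} {e : EN N} (he : ‖e‖ = 1) :
    ball ((1 / 2 : ℝ) • e) (1 / 4) ⊆ ball (0 : EN N) 1 := by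
  intro z hz
  have h1 : ‖z - (1 / 2 : ℝ) • e‖ < 1 / 4 := by simpa [dist_eq_norm] using hz
  have h2 : ‖(1 / 2 : ℝ) • e‖ = 1 / 2 := by rw [norm_smul, he]; norm_num
  have h3 : ‖z‖ ≤ ‖z - (1 / 2 : ℝ) • e‖ + ‖(1 / 2 : ℝ) • e‖ := by
    simpa using norm_add_le (z - (1 / 2 : ℝ) • e) ((1 / 2 : ℝ) • e)
  simp only [mem_ball, dist_zero_right]; linarith

lemma inner_on_half_ball {N : ℕ} {e : EN N} (he : ‖e‖ = 1) {z : EN N}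
    (hz : z ∈ ball ((1 / 2 : ℝ) • e) (1 / 4)) : 1 / 4 ≤ inner ℝ e z := by
  have h1 : ‖z - (1 / 2 : ℝ) • e‖ < 1 / 4 := by simpa [dist_eq_norm] using hz
  have h2 : inner ℝ e z = inner ℝ e (z - (1 / 2 : ℝ) • e) + 1 / 2 := by
    rw [inner_sub_right, inner_smul_right, real_inner_self_eq_norm_sq, he]; ring
  have h3 := abs_real_inner_le_norm e (z - (1 / 2 : ℝ) • e)
  rw [he, one_mul] at h3
  have := neg_abs_le (inner ℝ e (z - (1 / 2 : ℝ) • e))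
  linarith

lemma AdmM.second_moment {N : ℕ} {Λ β : ℝ} {ρ : Measure (EN N)} (h : AdmM N Λ β ρ) (hβ : 0 < β)
    (x : EN N) : β * ((1 / 4) ^ N / 16) * ‖x‖ ^ 2 ≤ ∫ z, (inner ℝ x z) ^ 2 ∂ρ := by
  have := h.prob
  by_cases hx : x = 0
  · simp [hx]
  have hxn : 0 < ‖x‖ := norm_pos_iff.2 hx
  set e : EN N := ‖x‖⁻¹ • x with he_def
  have he : ‖e‖ = 1 := by rw [he_def, norm_smul]; simp [hxn.ne']
  set S := ball ((1 / 2 : ℝ) • e) (1 / 4) with hS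
  have hxe : x = ‖x‖ • e := by rw [he_def, smul_smul]; simp [hxn.ne']
  have hle : ∀ z ∈ S, ‖x‖ ^ 2 / 16 ≤ (inner ℝ x z) ^ 2 := by
    intro z hz
    have h1 := inner_on_half_ball he hz
    have h2 : inner ℝ x z = ‖x‖ * inner ℝ e z := by
      conv_lhs => rw [hxe]
      rw [real_inner_smul_left]
    rw [h2, mul_pow]
    have : (1 / 4 : ℝ) ^ 2 ≤ (inner ℝ e z) ^ 2 := by gcongr
    nlinarith [sq_nonneg ‖x‖]
  have hint : Integrable (fun z => (inner ℝ x z) ^ 2) ρ := by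
    refine h.integrable (by fun_prop) (M := (‖x‖ * Λ) ^ 2) fun z hz => ?_
    rw [abs_pow]
    gcongr
    exact (abs_real_inner_le_norm x z).trans (by gcongr)
  have hρS : β * (1 / 4) ^ N ≤ ρ.real S := by
    have h1 := h.lower S
    simp only [Measure.smul_apply, smul_eq_mul] at h1
    rw [uB_ball (by norm_num) _ (half_ball_sub he), ← ENNReal.ofReal_mul hβ.le] at h1
    exact (ENNReal.ofReal_le_iff_le_toReal (measure_ne_top _ _)).1 h1
  calc β * ((1 / 4) ^ N / 16) * ‖x‖ ^ 2 = (‖x‖ ^ 2 / 16) * (β * (1 / 4) ^ N) := by ring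
    _ ≤ (‖x‖ ^ 2 / 16) * ρ.real S := by gcongr
    _ ≤ ∫ z in S, (inner ℝ x z) ^ 2 ∂ρ := by
        have := setIntegral_ge_of_const_le (μ := ρ) (s := S) (c := ‖x‖ ^ 2 / 16)
          measurableSet_ball (measure_ne_top _ _) hle hint.integrableOn
        rw [smul_eq_mul, mul_comm] at this
        exact this
    _ ≤ _ := setIntegral_le_integral hint (Filter.Eventually.of_forall fun z => sq_nonneg _)

lemma AdmM.barrier {N : ℕ} {Λ β : ℝ} {ρ : Measure (EN N)} (h : AdmM N Λ β ρ) (hβ : 0 < β)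
    {l ε : ℝ} (hl : 0 < l) (hs : l * ε ^ 2 * Λ ^ 2 ≤ 1) (x : EN N) :
    Real.exp (-l * ‖x‖ ^ 2) * ((1 - l * ε ^ 2 * Λ ^ 2) *
      (1 + 2 * l ^ 2 * ε ^ 2 * (β * ((1 / 4) ^ N / 16) * ‖x‖ ^ 2))) ≤
    ∫ z, Real.exp (-l * ‖x + ε • z‖ ^ 2) ∂ρ := by
  have := h.prob
  have := h.symm
  have hsm := h.second_moment hβ x
  have hint2 : Integrable (fun z => (inner ℝ x z) ^ 2) ρ := by
    refine h.integrable (by fun_prop) (M := (‖x‖ * Λ) ^ 2) fun z hz => ?_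
    rw [abs_pow]
    gcongr
    exact (abs_real_inner_le_norm x z).trans (by gcongr)
  have hint : ∀ s : ℝ, Integrable (fun z : EN N => Real.exp (-l * ‖x + s • z‖ ^ 2)) ρ := by
    intro s
    refine h.integrable (by fun_prop) (M := 1) fun z _ => ?_
    rw [abs_of_pos (Real.exp_pos _), Real.exp_le_one_iff]
    have : 0 ≤ l * ‖x + s • z‖ ^ 2 := by positivity
    linarith
  have hsymm : ∫ z, Real.exp (-l * ‖x + ε • z‖ ^ 2) ∂ρ
      = ∫ z, Real.exp (-l * ‖x + (-ε) • z‖ ^ 2) ∂ρ := by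
    rw [← integral_neg_eq_self]
    simp
  have hid : ∫ z, Real.exp (-l * ‖x + ε • z‖ ^ 2) ∂ρ
      = ∫ z, (Real.exp (-l * ‖x + ε • z‖ ^ 2) + Real.exp (-l * ‖x + (-ε) • z‖ ^ 2)) / 2 ∂ρ := by
    rw [integral_div, integral_add (hint _) (hint _), ← hsymm]; ring
  rw [hid]
  have hpt : ∀ z : EN N, (Real.exp (-l * ‖x + ε • z‖ ^ 2) + Real.exp (-l * ‖x + (-ε) • z‖ ^ 2)) / 2
      = Real.exp (-l * ‖x‖ ^ 2) * (Real.exp (-(l * ε ^ 2 * ‖z‖ ^ 2)) *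
        Real.cosh (2 * l * ε * inner ℝ x z)) := by
    intro z
    rw [Real.cosh_eq, @norm_add_sq_real, @norm_add_sq_real, norm_smul, norm_smul,
      real_inner_smul_right, real_inner_smul_right, mul_pow, mul_pow, Real.norm_eq_abs,
      Real.norm_eq_abs, sq_abs, sq_abs]
    rw [show Real.exp (-l * ‖x‖ ^ 2) * (Real.exp (-(l * ε ^ 2 * ‖z‖ ^ 2)) *
      ((Real.exp (2 * l * ε * inner ℝ x z) + Real.exp (-(2 * l * ε * inner ℝ x z))) / 2))
      = (Real.exp (-l * ‖x‖ ^ 2) * Real.exp (-(l * ε ^ 2 * ‖z‖ ^ 2)) *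
      Real.exp (2 * l * ε * inner ℝ x z) + Real.exp (-l * ‖x‖ ^ 2) * Real.exp (-(l * ε ^ 2 * ‖z‖ ^ 2)) *
      Real.exp (-(2 * l * ε * inner ℝ x z))) / 2 by ring]
    rw [← Real.exp_add, ← Real.exp_add, ← Real.exp_add]
    rw [add_comm]
    congr 3 <;> ring
  calc _ ≤ Real.exp (-l * ‖x‖ ^ 2) * ((1 - l * ε ^ 2 * Λ ^ 2) *
      (1 + 2 * l ^ 2 * ε ^ 2 * ∫ z, (inner ℝ x z) ^ 2 ∂ρ)) := by
        have : 0 ≤ 1 - l * ε ^ 2 * Λ ^ 2 := by linarith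
        gcongr
    _ = ∫ z, Real.exp (-l * ‖x‖ ^ 2) * ((1 - l * ε ^ 2 * Λ ^ 2) *
      (1 + 2 * l ^ 2 * ε ^ 2 * (inner ℝ x z) ^ 2)) ∂ρ := by
        rw [integral_const_mul, integral_const_mul, integral_add (integrable_const _) (hint2.const_mul _),
          integral_const_mul]
        simp
    _ ≤ _ := by
        refine integral_mono_ae ?_ (((hint _).add (hint _)).div_const 2) ?_
        · exact (((integrable_const _).add (hint2.const_mul _)).const_mul _).const_mul _
        filter_upwards [h.ae] with z hz
        simp only [hpt z]
        have h1 : 1 - l * ε ^ 2 * Λ ^ 2 ≤ Real.exp (-(l * ε ^ 2 * ‖z‖ ^ 2)) := by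
          refine le_trans ?_ (Real.one_sub_le_exp_neg _)
          gcongr
        have h2 := one_add_sq_le_cosh (2 * l * ε * inner ℝ x z)
        have h3 : 1 + 2 * l ^ 2 * ε ^ 2 * (inner ℝ x z) ^ 2 ≤ Real.cosh (2 * l * ε * inner ℝ x z) := by
          refine le_trans (le_of_eq ?_) h2; ring
        gcongr

def idx {N : ℕ} (h : ℝ) (x : EN N) : Fin N → ℤ := fun i => ⌊(x i + 1 / 2) / h⌋

lemma measurable_idx {N : ℕ} (h : ℝ) : Measurable (idx h : EN N → Fin N → ℤ) := by
  unfold idx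
  refine measurable_pi_lambda _ fun i => Int.measurable_floor.comp ?_
  fun_prop

lemma meas_cell {N : ℕ} (h : ℝ) (S : Set (Fin N → ℤ)) :
    MeasurableSet (idx h ⁻¹' S : Set (EN N)) :=
  measurable_idx h (Set.to_countable S).measurableSet

lemma norm_le_sqrt {N : ℕ} {x : EN N} {r : ℝ} (hr : 0 ≤ r) (h : ∀ i, |x i| ≤ r) :
    ‖x‖ ≤ Real.sqrt N * r := by
  rw [EuclideanSpace.norm_eq]
  refine Real.sqrt_le_iff.2 ⟨by positivity, ?_⟩
  rw [mul_pow, Real.sq_sqrt (by positivity)]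
  calc ∑ i, ‖x i‖ ^ 2 ≤ ∑ _i : Fin N, r ^ 2 := by
        gcongr with i
        simpa using h i
    _ = _ := by simp

lemma idx_dist {N : ℕ} {h : ℝ} (hh : 0 < h) {x y : EN N} (hxy : idx h x = idx h y) :
    ‖x - y‖ ≤ Real.sqrt N * h := by
  refine norm_le_sqrt hh.le fun i => ?_
  have h1 := congrFun hxy i
  simp only [idx] at h1
  have h2 := Int.abs_sub_lt_one_of_floor_eq_floor h1
  rw [← sub_div, abs_div, abs_of_pos hh, div_lt_one hh] at h2
  simpa using h2.le

lemma vol_cell {N : ℕ} {h : ℝ} (hh : 0 < h) (k : Fin N → ℤ) :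
    volume (idx h ⁻¹' {k} : Set (EN N)) = ENNReal.ofReal (h ^ N) := by
  have h1 : (idx h ⁻¹' {k} : Set (EN N)) = (MeasurableEquiv.toLp 2 (Fin N → ℝ)).symm ⁻¹'
      (Set.univ.pi fun i => Set.Ico (k i * h - 1 / 2) ((k i + 1) * h - 1 / 2)) := by
    ext x
    simp only [Set.mem_preimage, Set.mem_singleton_iff, Set.mem_pi, Set.mem_univ, true_imp_iff,
      Set.mem_Ico, funext_iff, idx, Int.floor_eq_iff, le_div_iff₀ hh, div_lt_iff₀ hh]
    refine forall_congr' fun i => ?_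
    have : (MeasurableEquiv.toLp 2 (Fin N → ℝ)).symm x i = x i := rfl
    rw [this]
    constructor <;> rintro ⟨h1, h2⟩ <;> constructor <;> linarith
  rw [h1, (EuclideanSpace.volume_preserving_symm_measurableEquiv_toLp (Fin N)).measure_preimage_equiv,
    Real.volume_pi_Ico]
  have : ∀ i, (((k i : ℝ) + 1) * h - 1 / 2) - (k i * h - 1 / 2) = h := fun i => by ring
  simp only [this]
  rw [Finset.prod_const, ENNReal.ofReal_pow hh.le]
  simp

lemma vol_tsum {N : ℕ} (h : ℝ) {S : Set (EN N)} (hS : MeasurableSet S) :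
    volume S = ∑' k : Fin N → ℤ, volume (S ∩ idx h ⁻¹' {k}) := by
  rw [← measure_iUnion]
  · congr 1; ext x; simp
  · intro i j hij
    refine Disjoint.mono Set.inter_subset_right Set.inter_subset_right ?_
    exact Disjoint.preimage _ (by simpa using hij)
  · intro k; exact hS.inter (meas_cell h _)

lemma slope_bound {N : ℕ} {ε : ℝ} (hε : 0 < ε) {x x' : EN N} (hxx : dist x x' < ε / 2)
    {a a' : EN N → ℝ} (ha : Measurable a)
    {c : ℝ} {v : EN N} (haff : ∀ y, a y - a' y = c + inner ℝ v y)
    (h0 : ∀ y ∈ ball x ε, 0 ≤ a y) (h0' : ∀ y ∈ ball x' ε, 0 ≤ a' y) {J : ℝ} (hJ : 0 ≤ J)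
    (hi : ∫⁻ y in ball x ε, ENNReal.ofReal (a y) ≤ ENNReal.ofReal J * volume (ball x ε))
    (hi' : ∫⁻ y in ball x' ε, ENNReal.ofReal (a' y) ≤ ENNReal.ofReal J * volume (ball x' ε)) :
    ‖v‖ ≤ 16 * 8 ^ N * J / ε := by
  by_cases hv : v = 0
  · simp only [hv, norm_zero]; positivity
  have hvn : 0 < ‖v‖ := norm_pos_iff.2 hv
  obtain ⟨e, he, hev⟩ : ∃ e : EN N, ‖e‖ = 1 ∧ ∀ z : EN N, 0 ≤ inner ℝ e z →
      ‖v‖ * inner ℝ e z ≤ |(c + inner ℝ v x) + inner ℝ v z| := by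
    have hn : ‖‖v‖⁻¹ • v‖ = 1 := by rw [norm_smul]; simp [hvn.ne']
    rcases le_total 0 (c + inner ℝ v x) with hc | hc
    · refine ⟨‖v‖⁻¹ • v, hn, fun z hz => ?_⟩
      rw [real_inner_smul_left, mul_inv_cancel_left₀ hvn.ne']
      exact le_trans (by linarith) (le_abs_self _)
    · refine ⟨-(‖v‖⁻¹ • v), by rw [norm_neg, hn], fun z hz => ?_⟩
      rw [inner_neg_left, real_inner_smul_left, mul_neg, mul_inv_cancel_left₀ hvn.ne']
      exact le_trans (by linarith) (neg_le_abs _)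
  have hε2 : 0 < ε / 2 := by positivity
  set S : Set (EN N) := ball (x + (ε / 2) • ((1 / 2 : ℝ) • e)) (ε / 2 * (1 / 4)) with hS
  have hSz : ∀ y ∈ S, ∃ z ∈ ball ((1 / 2 : ℝ) • e) (1 / 4), y = x + (ε / 2) • z := by
    intro y hy
    refine ⟨(ε / 2)⁻¹ • (y - x), ?_, ?_⟩
    · rw [← pre_ball hε2 x]
      simp only [Set.mem_preimage]
      rw [smul_inv_smul₀ hε2.ne', add_sub_cancel]
      exact hy
    · rw [smul_inv_smul₀ hε2.ne', add_sub_cancel]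
  have hSx : ∀ y ∈ S, dist y x < ε / 2 := by
    intro y hy
    obtain ⟨z, hz, rfl⟩ := hSz y hy
    have := half_ball_sub he hz
    simp only [mem_ball, dist_zero_right] at this
    rw [dist_eq_norm, add_sub_cancel_left, norm_smul, Real.norm_eq_abs, abs_of_pos hε2]
    nlinarith
  have hS1 : S ⊆ ball x ε := fun y hy => by
    have := hSx y hy
    rw [mem_ball]; linarith
  have hS2 : S ⊆ ball x' ε := fun y hy => by
    have := hSx y hy
    rw [mem_ball]; linarith [dist_triangle y x x']
  have hlow : ∀ y ∈ S, ‖v‖ * (ε / 8) ≤ a y + a' y := by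
    intro y hy
    have p1 := h0 y (hS1 hy)
    have p2 := h0' y (hS2 hy)
    have p3 : |a y - a' y| ≤ a y + a' y := by rw [abs_le]; constructor <;> linarith
    refine le_trans ?_ p3
    obtain ⟨z, hz, rfl⟩ := hSz y hy
    have q := inner_on_half_ball he hz
    rw [haff, inner_add_right, ← add_assoc]
    refine le_trans ?_ (hev ((ε / 2) • z) ?_)
    · rw [real_inner_smul_right]
      gcongr
      nlinarith
    · rw [real_inner_smul_right]; exact mul_nonneg hε2.le (by linarith)
  have hSm : MeasurableSet S := measurableSet_ball
  have key : ENNReal.ofReal (‖v‖ * (ε / 8)) * volume S ≤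
      ENNReal.ofReal J * volume (ball x ε) + ENNReal.ofReal J * volume (ball x' ε) := by
    calc _ = ∫⁻ y in S, ENNReal.ofReal (‖v‖ * (ε / 8)) := (setLIntegral_const _ _).symm
      _ ≤ ∫⁻ y in S, (ENNReal.ofReal (a y) + ENNReal.ofReal (a' y)) := by
          refine setLIntegral_mono' hSm fun y hy => ?_
          rw [← ENNReal.ofReal_add (h0 y (hS1 hy)) (h0' y (hS2 hy))]
          exact ENNReal.ofReal_le_ofReal (hlow y hy)
      _ = (∫⁻ y in S, ENNReal.ofReal (a y)) + ∫⁻ y in S, ENNReal.ofReal (a' y) :=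
          lintegral_add_left ha.ennreal_ofReal _
      _ ≤ _ := add_le_add ((lintegral_mono_set hS1).trans hi) ((lintegral_mono_set hS2).trans hi')
  rw [hS, vol_ball (by positivity), vol_ball hε, vol_ball hε, ← mul_assoc, ← mul_assoc, ← add_mul,
    ENNReal.mul_le_mul_iff_left vB_pos vB_top, ← ENNReal.ofReal_mul (by positivity),
    ← ENNReal.ofReal_mul hJ, ← ENNReal.ofReal_add (by positivity) (by positivity),
    ENNReal.ofReal_le_ofReal_iff (by positivity)] at key
  have e1 : (ε / 2 * (1 / 4)) ^ N = ε ^ N / 8 ^ N := by rw [← div_pow]; congr 1; ring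
  rw [e1] at key
  have hεN : 0 < ε ^ N := by positivity
  have h8 : (0 : ℝ) < 8 ^ N := by positivity
  rw [le_div_iff₀ hε]
  have e2 : ‖v‖ * (ε / 8) * (ε ^ N / 8 ^ N) = ε ^ N * (‖v‖ * ε / (8 * 8 ^ N)) := by
    field_simp
  rw [e2, show J * ε ^ N + J * ε ^ N = ε ^ N * (2 * J) by ring, mul_le_mul_iff_right₀ hεN,
    div_le_iff₀ (by positivity)] at key
  linarith

lemma bar_aux1 {t s : ℝ} (ht0 : 0 < t) (ht : t ≤ 1 / 2) (hs : 4 * t ≤ s) :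
    1 + t ≤ (1 - t) * (1 + s) := by
  nlinarith [mul_le_mul_of_nonneg_left hs (show 0 ≤ 1 - t by linarith)]

lemma bar_aux2 {t s : ℝ} (ht : t ≤ 1 / 2) (hs : 0 ≤ s) :
    1 - t ≤ (1 - t) * (1 + s) := by
  nlinarith [mul_nonneg (show 0 ≤ 1 - t by linarith) hs]

set_option maxHeartbeats 1000000 in
lemma contact {N : ℕ} (hN : 1 ≤ N) {Λ β : ℝ} (hΛ : 1 ≤ Λ) (hβ : 0 < β) {l ε : ℝ} (hl : 0 < l)
    (hlk : l * (β * ((1 / 4) ^ N / 16)) = 32 * Λ ^ 2) (hε : 0 < ε)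
    (hs : l * ε ^ 2 * Λ ^ 2 ≤ 1 / 2) (hεΛ : ε * Λ ≤ 1)
    {ρ : EN N → Measure (EN N)} (hρ : ∀ x, AdmM N Λ β (ρ x))
    {u : EN N → ℝ} (hu : Measurable u) (hu0 : ∀ x, 0 ≤ u x) {M : ℝ} (hM : ∀ x, u x ≤ M)
    (hsup : ∀ x ∈ ball (0 : EN N) (5 * Real.sqrt N), ∫ z, u (x + ε • z) ∂ρ x ≤ u x)
    {g0 γ : ℝ} (hg0 : g0 = Real.exp (-16 * l * N)) (hγ : γ = (Real.exp (-(9 / 4) * l * N) - g0) / 4)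
    (hγ0 : 0 < γ)
    {x0 : EN N} (hx0 : ‖x0‖ ≤ 3 / 2 * Real.sqrt N) (hux0 : u x0 < γ)
    {p : EN N} (hp : ‖p‖ ≤ γ / (26 * Real.sqrt N)) :
    ∃ (xp : EN N) (C : ℝ), ‖xp‖ < 1 / 4 ∧
      (∀ y ∈ ball xp ε, 0 ≤ C + inner ℝ p y - ((Real.exp (-l * ‖y‖ ^ 2) - g0) / 2 - u y)) ∧
      (∫⁻ y in ball xp ε, ENNReal.ofReal
        (C + inner ℝ p y - ((Real.exp (-l * ‖y‖ ^ 2) - g0) / 2 - u y)) ≤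
        ENNReal.ofReal (l * Λ ^ 2 * ε ^ 2 / β) * volume (ball xp ε)) ∧
      (∀ y ∈ ball xp ε, 1 ≤ u y →
        1 / 4 ≤ C + inner ℝ p y - ((Real.exp (-l * ‖y‖ ^ 2) - g0) / 2 - u y)) := by
  set n := Real.sqrt N with hn
  have hn1 : 1 ≤ n := by
    rw [hn]; apply Real.one_le_sqrt.2; exact_mod_cast hN
  have hnN : n ^ 2 = N := Real.sq_sqrt (by positivity)
  have hn0 : 0 < n := by linarith
  have hg0pos : 0 < g0 := by rw [hg0]; positivity
  have hexp1 : ∀ y : EN N, Real.exp (-l * ‖y‖ ^ 2) ≤ 1 := by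
    intro y; rw [Real.exp_le_one_iff]
    have : 0 ≤ l * ‖y‖ ^ 2 := by positivity
    linarith
  have hγ4 : γ ≤ 1 / 4 := by
    have : Real.exp (-(9 / 4) * l * N) ≤ 1 := by
      rw [Real.exp_le_one_iff]
      have : 0 ≤ 9 / 4 * l * N := by positivity
      linarith
    rw [hγ]; linarith
  set w : EN N → ℝ := fun y => (Real.exp (-l * ‖y‖ ^ 2) - g0) / 2 - u y with hw
  have hwm : Measurable w := by
    rw [hw]; exact Measurable.sub (by fun_prop) hu
  have hwx0 : γ < w x0 := by
    have : Real.exp (-(9 / 4) * l * N) ≤ Real.exp (-l * ‖x0‖ ^ 2) := by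
      rw [Real.exp_le_exp]
      have : ‖x0‖ ^ 2 ≤ (3 / 2 * n) ^ 2 := by gcongr
      rw [mul_pow, hnN] at this
      have := mul_le_mul_of_nonneg_left this hl.le
      linarith
    simp only [hw]; linarith
  -- slopes
  have hpy : ∀ y ∈ ball (0 : EN N) (5 * n), |inner ℝ p (y - x0)| ≤ γ / 4 := by
    intro y hy
    have hy' : ‖y‖ < 5 * n := by simpa using hy
    refine (abs_real_inner_le_norm _ _).trans ?_
    have h1 : ‖y - x0‖ ≤ 13 / 2 * n := (norm_sub_le _ _).trans (by linarith)
    calc ‖p‖ * ‖y - x0‖ ≤ γ / (26 * n) * (13 / 2 * n) := by gcongr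
      _ = γ / 4 := by field_simp; norm_num
  set F : EN N → ℝ := fun y => w y - inner ℝ p (y - x0) with hF
  set η := min (γ / 4) (g0 * (l * Λ ^ 2 * ε ^ 2) / 4) with hη
  have hη0 : 0 < η := by
    rw [hη]; apply lt_min <;> positivity
  have hη1 : η ≤ γ / 4 := min_le_left _ _
  have hη2 : η ≤ g0 * (l * Λ ^ 2 * ε ^ 2) / 4 := min_le_right _ _
  have hx0D : x0 ∈ ball (0 : EN N) (5 * n) := by
    simp only [mem_ball, dist_zero_right]; linarith
  obtain ⟨xp, hxpD, hxp⟩ : ∃ xp ∈ ball (0 : EN N) (5 * n), ∀ y ∈ ball (0 : EN N) (5 * n),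
      F y ≤ F xp + η := by
    set B := F '' ball (0 : EN N) (5 * n) with hB
    have hne : B.Nonempty := ⟨_, x0, hx0D, rfl⟩
    have hbdd : BddAbove B := by
      refine ⟨1, ?_⟩
      rintro _ ⟨y, hy, rfl⟩
      have h1 := hpy y hy
      have h2 := neg_abs_le (inner ℝ p (y - x0))
      have h3 := hexp1 y
      have h4 := hu0 y
      simp only [hF, hw]; linarith
    obtain ⟨_, ⟨xp, hxpD, rfl⟩, hlt⟩ := exists_lt_of_lt_csSup hne (sub_lt_self (sSup B) hη0)
    refine ⟨xp, hxpD, fun y hy => ?_⟩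
    have := le_csSup hbdd (Set.mem_image_of_mem F hy)
    linarith
  have hFx0 : F x0 = w x0 := by simp [hF]
  have hFxp : γ < F xp + η := by
    have := hxp x0 hx0D
    linarith
  have hwxp : 0 < w xp := by
    have h1 := hpy xp hxpD
    have h2 := neg_abs_le (inner ℝ p (xp - x0))
    simp only [hF] at hFxp
    linarith
  have hxp4 : ‖xp‖ < 4 * n := by
    by_contra hcon
    push Not at hcon
    have h1 : Real.exp (-l * ‖xp‖ ^ 2) ≤ g0 := by
      rw [hg0, Real.exp_le_exp]
      have : (4 * n) ^ 2 ≤ ‖xp‖ ^ 2 := by gcongr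
      rw [mul_pow, hnN] at this
      have := mul_le_mul_of_nonneg_left this hl.le
      linarith
    have := hu0 xp
    simp only [hw] at hwxp
    linarith
  have hstay : ∀ z : EN N, ‖z‖ ≤ Λ → xp + ε • z ∈ ball (0 : EN N) (5 * n) := by
    intro z hz
    simp only [mem_ball, dist_zero_right]
    have h1 : ‖ε • z‖ ≤ 1 := by
      rw [norm_smul, Real.norm_eq_abs, abs_of_pos hε]
      exact le_trans (by gcongr) hεΛ
    linarith [norm_add_le xp (ε • z)]
  set C := F xp + η - inner ℝ p x0 with hC
  have haF : ∀ y, C + inner ℝ p y - w y = F xp + η - F y := by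
    intro y; simp only [hC, hF, inner_sub_right]; ring
  set a : EN N → ℝ := fun y => C + inner ℝ p y - w y with ha
  have ham : Measurable a := by
    rw [ha]; exact Measurable.sub (by fun_prop) hwm
  have ha0 : ∀ y ∈ ball (0 : EN N) (5 * n), 0 ≤ a y := by
    intro y hy
    simp only [ha]; rw [haF]; linarith [hxp y hy]
  have hA := hρ xp
  have hprob := hA.prob
  have hneg := hA.symm
  have iu : Integrable (fun z => u (xp + ε • z)) (ρ xp) :=
    hA.integrable (hu.comp (meas_aff ε xp)) (M := M) fun z _ => by
      rw [abs_of_nonneg (hu0 _)]; exact hM _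
  have ie : Integrable (fun z : EN N => Real.exp (-l * ‖xp + ε • z‖ ^ 2)) (ρ xp) :=
    hA.integrable (by fun_prop) (M := 1) fun z _ => by
      rw [abs_of_pos (Real.exp_pos _)]; exact hexp1 _
  have ip : Integrable (fun z : EN N => inner ℝ p z) (ρ xp) :=
    hA.integrable (by fun_prop) (M := ‖p‖ * Λ) fun z hz =>
      (abs_real_inner_le_norm _ _).trans (by gcongr)
  have ip0 : ∫ z, inner ℝ p z ∂(ρ xp) = 0 := by
    have := integral_neg_eq_self (fun z => inner ℝ p z) (ρ xp)
    simp only [inner_neg_right, integral_neg] at this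
    linarith
  have haz : ∀ z, a (xp + ε • z) = (C + inner ℝ p xp + g0 / 2) + ε * inner ℝ p z
      - Real.exp (-l * ‖xp + ε • z‖ ^ 2) / 2 + u (xp + ε • z) := by
    intro z
    simp only [ha, hw, inner_add_right, real_inner_smul_right]; ring
  have hint : Integrable (fun z => a (xp + ε • z)) (ρ xp) := by
    simp only [haz]
    exact (((integrable_const _).add (ip.const_mul ε)).sub (ie.div_const 2)).add iu
  have hI : ∫ z, a (xp + ε • z) ∂(ρ xp) = (C + inner ℝ p xp + g0 / 2)
      - (∫ z, Real.exp (-l * ‖xp + ε • z‖ ^ 2) ∂(ρ xp)) / 2 + ∫ z, u (xp + ε • z) ∂(ρ xp) := by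
    simp only [haz]
    have i1 : Integrable (fun z : EN N => (C + inner ℝ p xp + g0 / 2) + ε * inner ℝ p z) (ρ xp) :=
      (integrable_const _).add (ip.const_mul ε)
    have i2 : Integrable (fun z : EN N => (C + inner ℝ p xp + g0 / 2) + ε * inner ℝ p z
      - Real.exp (-l * ‖xp + ε • z‖ ^ 2) / 2) (ρ xp) := i1.sub (ie.div_const 2)
    rw [integral_add i2 iu, integral_sub i1 (ie.div_const 2),
      integral_add (integrable_const _) (ip.const_mul ε), integral_const_mul, ip0, integral_div]
    simp
  have haxp : C + inner ℝ p xp + g0 / 2 = η + Real.exp (-l * ‖xp‖ ^ 2) / 2 - u xp := by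
    simp only [hC, hF, hw, inner_sub_right]; ring
  have hb := hA.barrier hβ hl (ε := ε) (by linarith) xp
  have hsx := hsup xp hxpD
  set G := Real.exp (-l * ‖xp‖ ^ 2) with hG
  have hG0 : 0 < G := Real.exp_pos _
  have hG1 : G ≤ 1 := hexp1 xp
  set t := l * ε ^ 2 * Λ ^ 2 with ht
  have ht0 : 0 < t := by positivity
  have htt : l * Λ ^ 2 * ε ^ 2 = t := by rw [ht]; ring
  rw [htt] at hη2
  have hI0 : 0 ≤ ∫ z, a (xp + ε • z) ∂(ρ xp) := by
    refine integral_nonneg_of_ae ?_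
    filter_upwards [hA.ae] with z hz using ha0 _ (hstay z hz)
  have hbs : 2 * l ^ 2 * ε ^ 2 * (β * ((1 / 4) ^ N / 16) * ‖xp‖ ^ 2) = 64 * t * ‖xp‖ ^ 2 := by
    calc _ = 2 * l * ε ^ 2 * (l * (β * ((1 / 4) ^ N / 16))) * ‖xp‖ ^ 2 := by ring
      _ = _ := by rw [hlk, ht]; ring
  rw [hbs] at hb
  have hxpr : ‖xp‖ < 1 / 4 := by
    by_contra hcon
    push Not at hcon
    have h1 : (1 / 4 : ℝ) ^ 2 ≤ ‖xp‖ ^ 2 := by gcongr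
    have h2 : g0 ≤ G := by
      rw [hg0, hG, Real.exp_le_exp]
      have : ‖xp‖ ^ 2 ≤ (4 * n) ^ 2 := by gcongr
      rw [mul_pow, hnN] at this
      have := mul_le_mul_of_nonneg_left this hl.le
      linarith
    have h3 : 1 + t ≤ (1 - t) * (1 + 64 * t * ‖xp‖ ^ 2) := by
      have : 64 * t * (1 / 4 : ℝ) ^ 2 ≤ 64 * t * ‖xp‖ ^ 2 := by gcongr
      exact bar_aux1 ht0 hs (by linarith)
    have h4 : G * (1 + t) ≤ G * ((1 - t) * (1 + 64 * t * ‖xp‖ ^ 2)) := by gcongr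
    have h5 : g0 * t ≤ G * t := by gcongr
    have h6 : 0 < g0 * t := by positivity
    rw [hI, haxp] at hI0
    linarith
  have hIle : ∫ z, a (xp + ε • z) ∂(ρ xp) ≤ t := by
    rw [hI, haxp]
    have h3 : 1 - t ≤ (1 - t) * (1 + 64 * t * ‖xp‖ ^ 2) := by
      exact bar_aux2 hs (by positivity)
    have h4 : G * (1 - t) ≤ G * ((1 - t) * (1 + 64 * t * ‖xp‖ ^ 2)) := by gcongr
    have h5 : G * t ≤ 1 * t := by gcongr
    have hg1 : g0 ≤ 1 := by rw [hg0, Real.exp_le_one_iff]; have : 0 ≤ 16 * l * N := by positivity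
                            linarith
    have h6 : g0 * t ≤ 1 * t := by gcongr
    linarith
  have hball : ball xp ε ⊆ ball (0 : EN N) (5 * n) := by
    intro y hy
    have h1 : ‖y - xp‖ < ε := by simpa [dist_eq_norm] using hy
    have h2 : ε ≤ 1 := le_trans (le_mul_of_one_le_right hε.le hΛ) hεΛ
    simp only [mem_ball, dist_zero_right]
    have := norm_add_le (y - xp) xp
    rw [sub_add_cancel] at this
    linarith
  refine ⟨xp, C, hxpr, fun y hy => ha0 y (hball hy), ?_, ?_⟩
  · rw [htt]
    exact hA.lint_ball hβ hε xp ham hint (fun z hz => ha0 _ (hstay z hz)) hIle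
  · intro y hy huy
    have h1 := hpy y (hball hy)
    have h2 := neg_abs_le (inner ℝ p (y - x0))
    have h3 := hexp1 y
    have h5 : F y ≤ - (1 / 4) := by
      simp only [hF, hw]; linarith
    have h6 := haF y
    simp only [hw] at h6
    rw [h6]; linarith

set_option maxHeartbeats 1000000 in
theorem meas_to_point (N : ℕ) (hN : 1 ≤ N) (Λ β : ℝ) (hΛ : 1 ≤ Λ) (hβ : 0 < β) :
    ∃ ε₁ δ γ : ℝ, 0 < ε₁ ∧ 0 < δ ∧ δ < 1 ∧ 0 < γ ∧ γ ≤ 1 ∧ ∀ ε : ℝ, 0 < ε → ε < ε₁ →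
    ∀ ρ : EN N → Measure (EN N), (∀ x, AdmM N Λ β (ρ x)) →
    ∀ u : EN N → ℝ, Measurable u → (∀ x, 0 ≤ u x) → (∃ M, ∀ x, u x ≤ M) →
    (∀ x ∈ ball (0 : EN N) (5 * Real.sqrt N), ∫ z, u (x + ε • z) ∂ρ x ≤ u x) →
    volume (ball (0 : EN N) (1 / 2) \ {y | 1 ≤ u y}) ≤ ENNReal.ofReal δ →
    ∀ x0 : EN N, ‖x0‖ ≤ 3 / 2 * Real.sqrt N → γ ≤ u x0 := by
  set n := Real.sqrt N with hn
  have hn1 : 1 ≤ n := by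
    rw [hn]; apply Real.one_le_sqrt.2; exact_mod_cast hN
  have hN0 : (0 : ℝ) < N := by exact_mod_cast hN
  have hn0 : 0 < n := by linarith
  set l : ℝ := 32 * Λ ^ 2 / (β * ((1 / 4) ^ N / 16)) with hl
  have hl0 : 0 < l := by rw [hl]; positivity
  have hlk : l * (β * ((1 / 4) ^ N / 16)) = 32 * Λ ^ 2 := by
    rw [hl]; exact div_mul_cancel₀ _ (by positivity)
  set g0 := Real.exp (-16 * l * N) with hg0
  set γ := (Real.exp (-(9 / 4) * l * N) - g0) / 4 with hγ
  have hγ0 : 0 < γ := by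
    have : g0 < Real.exp (-(9 / 4) * l * N) := by
      rw [hg0, Real.exp_lt_exp]
      have : 0 < l * N := by positivity
      linarith
    rw [hγ]; linarith
  have hγ1 : γ ≤ 1 := by
    have h1 : Real.exp (-(9 / 4) * l * N) ≤ 1 := by
      rw [Real.exp_le_one_iff]
      have : 0 ≤ 9 / 4 * l * N := by positivity
      linarith
    have h2 : 0 < g0 := Real.exp_pos _
    rw [hγ]; linarith
  set ω := (volume (ball (0 : EN N) 1)).toReal with hω
  have hω0 : 0 < ω := ENNReal.toReal_pos vB_pos vB_top
  have hωe : volume (ball (0 : EN N) 1) = ENNReal.ofReal ω := (ENNReal.ofReal_toReal vB_top).symm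
  set C1 := 17 * 8 ^ N * (l * Λ ^ 2 / β) with hC1
  have hC10 : 0 < C1 := by positivity
  set C2 := (C1 * (4 * n)) ^ N * ω with hC2
  have hC20 : 0 < C2 := by positivity
  set P0 := γ / (26 * n) with hP0
  have hP00 : 0 < P0 := by positivity
  set δ := min (1 / 2) (P0 ^ N * ω / (4 * C2)) with hδ
  have hδ0 : 0 < δ := by rw [hδ]; apply lt_min <;> positivity
  have hδ1 : δ < 1 := lt_of_le_of_lt (min_le_left _ _) (by norm_num)
  have hδ2 : 2 * C2 * δ < P0 ^ N * ω := by
    have h1 : δ ≤ P0 ^ N * ω / (4 * C2) := min_le_right _ _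
    have h2 : 0 < P0 ^ N * ω := by positivity
    calc 2 * C2 * δ ≤ 2 * C2 * (P0 ^ N * ω / (4 * C2)) := by gcongr
      _ = P0 ^ N * ω / 2 := by field_simp; ring
      _ < _ := by linarith
  -- smallness of ε
  set c1 := 1 / (2 * l * Λ ^ 2) with hc1
  set c2 := β / (8 * l * Λ ^ 2 * ω * (4 * n) ^ N) with hc2
  have hc10 : 0 < c1 := by positivity
  have hc20 : 0 < c2 := by positivity
  refine ⟨min (1 / (4 * Λ)) (min (min 1 c1) c2), δ, γ, ?_, hδ0, hδ1, hγ0, hγ1, ?_⟩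
  · refine lt_min (by positivity) (lt_min (lt_min one_pos hc10) hc20)
  intro ε hε hε1 ρ hρ u hu hu0 ⟨M, hM⟩ hsup hvol x0 hx0
  by_contra hcon
  push Not at hcon
  have e1 : ε < 1 / (4 * Λ) := lt_of_lt_of_le hε1 (min_le_left _ _)
  have e2 : ε < 1 := lt_of_lt_of_le hε1 ((min_le_right _ _).trans ((min_le_left _ _).trans (min_le_left _ _)))
  have e3 : ε < c1 := lt_of_lt_of_le hε1 ((min_le_right _ _).trans ((min_le_left _ _).trans (min_le_right _ _)))
  have e4 : ε < c2 := lt_of_lt_of_le hε1 ((min_le_right _ _).trans (min_le_right _ _))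
  have hεsq : ε ^ 2 ≤ ε := by nlinarith
  have e5 : ε * Λ ≤ 1 / 4 := by
    rw [lt_div_iff₀ (by positivity)] at e1; linarith
  have e6 : l * ε ^ 2 * Λ ^ 2 ≤ 1 / 2 := by
    have h1 : ε ^ 2 ≤ c1 := by linarith
    rw [hc1, le_div_iff₀ (by positivity)] at h1
    linarith
  have e7 : ε ≤ 1 / 4 := by nlinarith
  have e8 : 8 * (l * Λ ^ 2 * ε ^ 2 / β) * ω * (4 * n) ^ N ≤ 1 := by
    have h1 : ε ^ 2 ≤ c2 := by linarith
    rw [hc2, le_div_iff₀ (by positivity)] at h1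
    calc _ = (ε ^ 2 * (8 * l * Λ ^ 2 * ω * (4 * n) ^ N)) / β := by ring
      _ ≤ β / β := by gcongr
      _ = 1 := div_self hβ.ne'
  have hct : ∀ p : EN N, ∃ (xp : EN N) (C : ℝ), ‖p‖ ≤ P0 → ‖xp‖ < 1 / 4 ∧
      (∀ y ∈ ball xp ε, 0 ≤ C + inner ℝ p y - ((Real.exp (-l * ‖y‖ ^ 2) - g0) / 2 - u y)) ∧
      (∫⁻ y in ball xp ε, ENNReal.ofReal
        (C + inner ℝ p y - ((Real.exp (-l * ‖y‖ ^ 2) - g0) / 2 - u y)) ≤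
        ENNReal.ofReal (l * Λ ^ 2 * ε ^ 2 / β) * volume (ball xp ε)) ∧
      (∀ y ∈ ball xp ε, 1 ≤ u y →
        1 / 4 ≤ C + inner ℝ p y - ((Real.exp (-l * ‖y‖ ^ 2) - g0) / 2 - u y)) := by
    intro p
    by_cases hp : ‖p‖ ≤ P0
    · obtain ⟨xp, C, h⟩ := contact hN hΛ hβ hl0 hlk hε e6 (by linarith) hρ hu hu0 hM hsup hg0 hγ hγ0
        hx0 hcon hp
      exact ⟨xp, C, fun _ => h⟩
    · exact ⟨0, 0, fun h => absurd h hp⟩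
  choose X C hX using hct
  set h := ε / (4 * n) with hh
  have hh0 : 0 < h := by positivity
  have hnh : n * h = ε / 4 := by rw [hh]; field_simp
  set E : Set (EN N) := {y | 1 ≤ u y} with hE
  have hEm : MeasurableSet E := measurableSet_le measurable_const hu
  set R := ball (0 : EN N) (1 / 2) \ E with hR
  have hRm : MeasurableSet R := measurableSet_ball.diff hEm
  set J := l * Λ ^ 2 * ε ^ 2 / β with hJ
  have hJ0 : 0 < J := by positivity
  have ham : ∀ (c : ℝ) (p : EN N), Measurable
      (fun y => c + inner ℝ p y - ((Real.exp (-l * ‖y‖ ^ 2) - g0) / 2 - u y)) := by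
    intro c p
    exact Measurable.sub (by fun_prop) (Measurable.sub (by fun_prop) hu)
  have hcellvol : ENNReal.ofReal ((C1 * ε) ^ N) * volume (ball (0 : EN N) 1)
      = ENNReal.ofReal C2 * ENNReal.ofReal (h ^ N) := by
    rw [hωe, ← ENNReal.ofReal_mul (by positivity), ← ENNReal.ofReal_mul hC20.le, hC2, hh]
    congr 1
    rw [div_pow, mul_pow C1, mul_pow C1]
    field_simp
  have hPk : ∀ k : Fin N → ℤ, volume (ball (0 : EN N) P0 ∩ {p | idx h (X p) = k}) ≤
      ENNReal.ofReal (2 * C2) * volume (R ∩ idx h ⁻¹' {k}) := by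
    intro k
    by_cases hne : (ball (0 : EN N) P0 ∩ {p | idx h (X p) = k}).Nonempty
    swap
    · rw [Set.not_nonempty_iff_eq_empty.1 hne]; simp
    obtain ⟨q, hqP, hqk⟩ := hne
    simp only [Set.mem_ofPred_eq] at hqk
    have hqP' : ‖q‖ ≤ P0 := by
      have : ‖q‖ < P0 := by simpa using hqP
      exact this.le
    obtain ⟨hq1, hq2, hq3, hq4⟩ := hX q hqP'
    -- slopes in a small ball
    have hsub : ball (0 : EN N) P0 ∩ {p | idx h (X p) = k} ⊆ ball q (C1 * ε) := by
      rintro p ⟨hpP, hpk⟩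
      simp only [Set.mem_ofPred_eq] at hpk
      have hpP' : ‖p‖ ≤ P0 := by
        have : ‖p‖ < P0 := by simpa using hpP
        exact this.le
      obtain ⟨hp1, hp2, hp3, hp4⟩ := hX p hpP'
      have hd : dist (X p) (X q) < ε / 2 := by
        rw [dist_eq_norm]
        have := idx_dist hh0 (hpk.trans hqk.symm)
        rw [← hn, hnh] at this
        linarith
      have := slope_bound hε hd (ham (C p) p) (c := C p - C q) (v := p - q)
        (fun y => by rw [inner_sub_left]; ring) hp2 hq2 hJ0.le hp3 hq3
      rw [mem_ball, dist_eq_norm]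
      refine lt_of_le_of_lt this ?_
      rw [hC1, hJ, div_lt_iff₀ hε]
      have : 0 < 8 ^ N * (l * Λ ^ 2 / β) * ε ^ 2 := by positivity
      calc 16 * 8 ^ N * (l * Λ ^ 2 * ε ^ 2 / β) = 16 * (8 ^ N * (l * Λ ^ 2 / β) * ε ^ 2) := by ring
        _ < 17 * (8 ^ N * (l * Λ ^ 2 / β) * ε ^ 2) := by linarith
        _ = _ := by ring
    have hcellb : (idx h ⁻¹' {k} : Set (EN N)) ⊆ ball (X q) ε := by
      intro y hy
      simp only [Set.mem_preimage, Set.mem_singleton_iff] at hy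
      have := idx_dist hh0 (hy.trans hqk.symm)
      rw [← hn, hnh] at this
      rw [mem_ball, dist_eq_norm]; linarith
    have hcellQ : (idx h ⁻¹' {k} : Set (EN N)) ⊆ ball 0 (1 / 2) := by
      intro y hy
      have h1 := hcellb hy
      rw [mem_ball, dist_eq_norm] at h1
      have := norm_add_le (y - X q) (X q)
      rw [sub_add_cancel] at this
      rw [mem_ball, dist_zero_right]; linarith
    -- E has small measure in the cell
    have hEs : ENNReal.ofReal (1 / 4) * volume (E ∩ idx h ⁻¹' {k}) ≤
        ENNReal.ofReal J * volume (ball (X q) ε) := by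
      refine le_trans ?_ hq3
      rw [← setLIntegral_const]
      refine le_trans (setLIntegral_mono' (hEm.inter (meas_cell h _)) fun y hy =>
        ENNReal.ofReal_le_ofReal (hq4 y (hcellb hy.2) hy.1)) ?_
      exact lintegral_mono_set (Set.inter_subset_right.trans hcellb)
    have hEs2 : volume (E ∩ idx h ⁻¹' {k}) ≤ ENNReal.ofReal (h ^ N / 2) := by
      have h4 : volume (E ∩ idx h ⁻¹' {k})
          = ENNReal.ofReal 4 * (ENNReal.ofReal (1 / 4) * volume (E ∩ idx h ⁻¹' {k})) := by
        rw [← mul_assoc, ← ENNReal.ofReal_mul (by norm_num)]; norm_num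
      rw [h4]
      refine le_trans (mul_le_mul_right hEs _) ?_
      rw [vol_ball hε, hωe, ← ENNReal.ofReal_mul (by positivity), ← ENNReal.ofReal_mul hJ0.le,
        ← ENNReal.ofReal_mul (by norm_num)]
      refine ENNReal.ofReal_le_ofReal ?_
      have hhN : h ^ N = ε ^ N / (4 * n) ^ N := by rw [hh, div_pow]
      rw [hhN]
      have h5 : 0 < ε ^ N := by positivity
      have h6 : 0 < (4 * n) ^ N := by positivity
      rw [div_div, le_div_iff₀ (by positivity)]
      calc 4 * (J * (ε ^ N * ω)) * ((4 * n) ^ N * 2) = ε ^ N * (8 * J * ω * (4 * n) ^ N) := by ring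
        _ ≤ ε ^ N * 1 := by gcongr
        _ = _ := mul_one _
    have hRs : ENNReal.ofReal (h ^ N / 2) ≤ volume (R ∩ idx h ⁻¹' {k}) := by
      have h1 : (idx h ⁻¹' {k} : Set (EN N)) ⊆ (E ∩ idx h ⁻¹' {k}) ∪ (R ∩ idx h ⁻¹' {k}) := by
        intro y hy
        by_cases hyE : y ∈ E
        · exact Or.inl ⟨hyE, hy⟩
        · exact Or.inr ⟨⟨hcellQ hy, hyE⟩, hy⟩
      have h2 := (measure_mono h1).trans (measure_union_le (μ := volume) _ _)
      rw [vol_cell hh0] at h2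
      have h3 : ENNReal.ofReal (h ^ N) = ENNReal.ofReal (h ^ N / 2) + ENNReal.ofReal (h ^ N / 2) := by
        rw [← ENNReal.ofReal_add (by positivity) (by positivity)]; congr 1; ring
      rw [h3] at h2
      have h4 := h2.trans (add_le_add_left hEs2 _)
      exact (ENNReal.add_le_add_iff_left ENNReal.ofReal_ne_top).1 h4
    calc _ ≤ volume (ball q (C1 * ε)) := measure_mono hsub
      _ = ENNReal.ofReal C2 * ENNReal.ofReal (h ^ N) := by rw [vol_ball (by positivity), hcellvol]
      _ = ENNReal.ofReal (2 * C2) * ENNReal.ofReal (h ^ N / 2) := by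
          rw [← ENNReal.ofReal_mul (by positivity), ← ENNReal.ofReal_mul (by positivity)]
          congr 1; ring
      _ ≤ _ := by gcongr
  have hfin : volume (ball (0 : EN N) P0) ≤ ENNReal.ofReal (2 * C2 * δ) := by
    calc volume (ball (0 : EN N) P0)
        ≤ volume (⋃ k : Fin N → ℤ, ball (0 : EN N) P0 ∩ {p | idx h (X p) = k}) := by
          refine measure_mono fun p hp => ?_
          simp only [Set.mem_iUnion]
          exact ⟨idx h (X p), hp, rfl⟩
      _ ≤ ∑' k : Fin N → ℤ, volume (ball (0 : EN N) P0 ∩ {p | idx h (X p) = k}) := measure_iUnion_le _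
      _ ≤ ∑' k : Fin N → ℤ, ENNReal.ofReal (2 * C2) * volume (R ∩ idx h ⁻¹' {k}) :=
          ENNReal.tsum_le_tsum hPk
      _ = ENNReal.ofReal (2 * C2) * volume R := by rw [ENNReal.tsum_mul_left, ← vol_tsum h hRm]
      _ ≤ ENNReal.ofReal (2 * C2) * ENNReal.ofReal δ := by gcongr
      _ = _ := by rw [← ENNReal.ofReal_mul (by positivity)]
  rw [vol_ball hP00, hωe, ← ENNReal.ofReal_mul (by positivity),
    ENNReal.ofReal_le_ofReal_iff (by positivity)] at hfin
  linarith

def MTP (N : ℕ) (Λ β ε₁ δ γ : ℝ) : Prop :=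
    ∀ ε : ℝ, 0 < ε → ε < ε₁ →
    ∀ ρ : EN N → Measure (EN N), (∀ x, AdmM N Λ β (ρ x)) →
    ∀ u : EN N → ℝ, Measurable u → (∀ x, 0 ≤ u x) → (∃ M, ∀ x, u x ≤ M) →
    (∀ x ∈ ball (0 : EN N) (5 * Real.sqrt N), ∫ z, u (x + ε • z) ∂ρ x ≤ u x) →
    volume (ball (0 : EN N) (1 / 2) \ {y | 1 ≤ u y}) ≤ ENNReal.ofReal δ →
    ∀ x0 : EN N, ‖x0‖ ≤ 3 / 2 * Real.sqrt N → γ ≤ u x0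

lemma MTP.scaled {N : ℕ} {Λ β ε₁ δ γ : ℝ} (h : MTP N Λ β ε₁ δ γ) {ε s : ℝ} (hε : 0 < ε) (hs : 0 < s)
    (hεs : ε < ε₁ * s) {ρ : EN N → Measure (EN N)} (hρ : ∀ x, AdmM N Λ β (ρ x))
    {u : EN N → ℝ} (hu : Measurable u) (hu0 : ∀ x, 0 ≤ u x) (hM : ∃ M, ∀ x, u x ≤ M) (c : EN N)
    {κ : ℝ} (hκ : 0 < κ)
    (hsup : ∀ x ∈ ball c (5 * Real.sqrt N * s), ∫ z, u (x + ε • z) ∂ρ x ≤ u x)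
    (hvol : volume (ball c (s / 2) \ {y | κ ≤ u y}) ≤ ENNReal.ofReal (δ * s ^ N))
    {x : EN N} (hx : ‖x - c‖ ≤ 3 / 2 * Real.sqrt N * s) : γ * κ ≤ u x := by
  obtain ⟨M, hM⟩ := hM
  have key := h (ε / s) (by positivity) (by rwa [div_lt_iff₀ hs]) (fun y => ρ (c + s • y))
    (fun y => hρ _) (fun y => u (c + s • y) / κ) ((hu.comp (meas_aff s c)).div_const κ)
    (fun y => div_nonneg (hu0 _) hκ.le)
    ⟨M / κ, fun y => by
      have := hM (c + s • y)
      gcongr⟩ ?_ ?_ (s⁻¹ • (x - c)) ?_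
  · simp only [smul_inv_smul₀ hs.ne', add_sub_cancel] at key
    rwa [le_div_iff₀ hκ] at key
  · intro y hy
    have e1 : ∀ z : EN N, c + s • (y + (ε / s) • z) = (c + s • y) + ε • z := by
      intro z
      rw [smul_add, smul_smul, mul_div_cancel₀ _ hs.ne', add_assoc]
    simp only [e1, integral_div]
    gcongr
    refine hsup _ ?_
    rw [mem_ball, dist_eq_norm, add_sub_cancel_left, norm_smul, Real.norm_eq_abs, abs_of_pos hs,
      mul_comm]
    gcongr
    simpa using hy
  · have e1 : ball (0 : EN N) (1 / 2) \ {y | 1 ≤ u (c + s • y) / κ}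
        = (fun z : EN N => c + s • z) ⁻¹' (ball c (s / 2) \ {y | κ ≤ u y}) := by
      rw [Set.preimage_sdiff]
      have := pre_ball hs c 0 (1 / 2)
      rw [smul_zero, add_zero, mul_one_div] at this
      rw [this]
      congr 1
      ext y
      simp only [Set.mem_ofPred_eq, Set.mem_preimage]
      rw [one_le_div hκ]
    rw [e1, vol_pre hs]
    calc _ ≤ ENNReal.ofReal (s ^ N)⁻¹ * ENNReal.ofReal (δ * s ^ N) := by gcongr
      _ = ENNReal.ofReal δ := by
        rw [← ENNReal.ofReal_mul (by positivity)]
        congr 1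
        field_simp
  · rw [norm_smul, Real.norm_eq_abs, abs_of_pos (by positivity), inv_mul_le_iff₀ hs]
    linarith

/-- dyadic side lengths -/
def sd (j : ℕ) : ℝ := (1 / 2) ^ j

lemma sd_pos (j : ℕ) : 0 < sd j := by unfold sd; positivity
lemma sd_succ (j : ℕ) : sd j = 2 * sd (j + 1) := by unfold sd; rw [pow_succ]; ring
lemma sd_zero : sd 0 = 1 := by simp [sd]
lemma sd_anti {i j : ℕ} (h : i ≤ j) : sd j ≤ sd i :=
  pow_le_pow_of_le_one (by norm_num) (by norm_num) h

lemma floor_half {s t : ℝ} (h : ⌊2 * s⌋ = ⌊2 * t⌋) : ⌊s⌋ = ⌊t⌋ := by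
  have a1 : 2 * ⌊s⌋ ≤ ⌊2 * s⌋ := by
    rw [Int.le_floor]; push_cast; linarith [Int.floor_le s]
  have a2 : ⌊2 * s⌋ < 2 * ⌊s⌋ + 2 := by
    rw [Int.floor_lt]; push_cast; linarith [Int.lt_floor_add_one s]
  have b1 : 2 * ⌊t⌋ ≤ ⌊2 * t⌋ := by
    rw [Int.le_floor]; push_cast; linarith [Int.floor_le t]
  have b2 : ⌊2 * t⌋ < 2 * ⌊t⌋ + 2 := by
    rw [Int.floor_lt]; push_cast; linarith [Int.lt_floor_add_one t]
  omega

lemma div_sd_succ (a : ℝ) (j : ℕ) : a / sd (j + 1) = 2 * (a / sd j) := by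
  have := sd_pos (j + 1)
  rw [sd_succ j]; field_simp

lemma idx_up {N : ℕ} {j : ℕ} {x y : EN N} (h : idx (sd (j + 1)) x = idx (sd (j + 1)) y) :
    idx (sd j) x = idx (sd j) y := by
  funext i
  have := congrFun h i
  simp only [idx, div_sd_succ] at this
  exact floor_half this

lemma idx_mono {N : ℕ} {i j : ℕ} (hij : i ≤ j) {x y : EN N} (h : idx (sd j) x = idx (sd j) y) :
    idx (sd i) x = idx (sd i) y := by
  induction hij with
  | refl => exact h
  | step _ ih => exact ih (idx_up h)

def Sat {N : ℕ} (l : ℕ) (S : Set (EN N)) : Prop :=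
  ∀ x y, idx (sd l) x = idx (sd l) y → x ∈ S → y ∈ S

lemma Sat.meas {N l : ℕ} {S : Set (EN N)} (h : Sat l S) : MeasurableSet S := by
  have : S = idx (sd l) ⁻¹' (idx (sd l) '' S) := by
    ext x
    constructor
    · intro hx; exact ⟨x, hx, rfl⟩
    · rintro ⟨y, hy, hyx⟩; exact h y x hyx hy
  rw [this]; exact meas_cell _ _

abbrev cel {N : ℕ} (j : ℕ) (k : Fin N → ℤ) : Set (EN N) := idx (sd j) ⁻¹' {k}

lemma vol_cel {N : ℕ} (j : ℕ) (k : Fin N → ℤ) :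
    volume (cel j k) = ENNReal.ofReal (sd j ^ N) := vol_cell (sd_pos j) k

def til {N : ℕ} (q : ℝ≥0∞) (l : ℕ) (E : Set (EN N)) : Set (EN N) :=
  {x | ∃ j < l, ∃ x', idx (sd j) x' = idx (sd j) x ∧
    q * volume (cel (j + 1) (idx (sd (j + 1)) x')) < volume (E ∩ cel (j + 1) (idx (sd (j + 1)) x'))}

lemma til_sat {N : ℕ} (q : ℝ≥0∞) (l : ℕ) (E : Set (EN N)) : Sat l (til q l E) := by
  rintro x y hxy ⟨j, hj, x', h1, h2⟩
  exact ⟨j, hj, x', h1.trans (idx_mono hj.le hxy), h2⟩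

lemma CZ {N : ℕ} {q : ℝ≥0∞} (hq : q < 1) {l : ℕ} {E : Set (EN N)} (hE : Sat l E) :
    ∀ (d j : ℕ) (k : Fin N → ℤ), j + d = l → volume (E ∩ cel j k) ≤ q * volume (cel j k) →
      volume (E ∩ cel j k) ≤ q * volume (til q l E ∩ cel j k) := by
  intro d
  induction d with
  | zero =>
    intro j k hj hle
    have hj : j = l := by omega
    subst hj
    by_cases hne : (E ∩ cel j k).Nonempty
    · exfalso
      obtain ⟨x, hxE, hxk⟩ := hne
      have hxk : idx (sd j) x = k := hxk
      have : E ∩ cel j k = cel j k := by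
        refine Set.inter_eq_right.2 fun y hy => hE x y ?_ hxE
        have hy : idx (sd j) y = k := hy
        rw [hxk, hy]
      rw [this, vol_cel] at hle
      have h0 : ENNReal.ofReal (sd j ^ N) ≠ 0 := by
        have := sd_pos j
        simp; positivity
      have : q * ENNReal.ofReal (sd j ^ N) < 1 * ENNReal.ofReal (sd j ^ N) :=
        ENNReal.mul_lt_mul_left h0 ENNReal.ofReal_ne_top hq
      rw [one_mul] at this
      exact absurd hle (not_le.2 this)
    · rw [Set.not_nonempty_iff_eq_empty.1 hne]; simp
  | succ d ih =>
    intro j k hj hle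
    by_cases hex : ∃ x' ∈ cel j k, q * volume (cel (j + 1) (idx (sd (j + 1)) x')) <
        volume (E ∩ cel (j + 1) (idx (sd (j + 1)) x'))
    · obtain ⟨x', hx', hlt⟩ := hex
      have hx' : idx (sd j) x' = k := hx'
      have : til q l E ∩ cel j k = cel j k := by
        refine Set.inter_eq_right.2 fun y hy => ?_
        have hy : idx (sd j) y = k := hy
        exact ⟨j, by omega, x', hx'.trans hy.symm, hlt⟩
      rw [this]; exact hle
    · push Not at hex
      have m1 : MeasurableSet (E ∩ cel j k) := hE.meas.inter (meas_cell _ _)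
      have m2 : MeasurableSet (til q l E ∩ cel j k) := (til_sat q l E).meas.inter (meas_cell _ _)
      rw [vol_tsum (sd (j + 1)) m1, vol_tsum (sd (j + 1)) m2, ← ENNReal.tsum_mul_left]
      refine ENNReal.tsum_le_tsum fun k' => ?_
      by_cases hne : (cel j k ∩ cel (j + 1) k').Nonempty
      · obtain ⟨x', hx', hx''⟩ := hne
        have hx' : idx (sd j) x' = k := hx'
        have hx'' : idx (sd (j + 1)) x' = k' := hx''
        have hsub : (cel (j + 1) k' : Set (EN N)) ⊆ cel j k := by
          intro y hy
          have hy : idx (sd (j + 1)) y = k' := hy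
          exact (idx_up (hy.trans hx''.symm)).trans hx'
        have e : ∀ S : Set (EN N), S ∩ cel j k ∩ cel (j + 1) k' = S ∩ cel (j + 1) k' := by
          intro S
          rw [Set.inter_assoc, Set.inter_eq_right.2 hsub]
        rw [e, e]
        refine ih (j + 1) k' (by omega) ?_
        have := hex x' hx'
        rwa [hx''] at this
      · rw [Set.inter_assoc, Set.not_nonempty_iff_eq_empty.1 hne]; simp

abbrev Q0 (N : ℕ) : Set (EN N) := cel 0 0

lemma vol_Q0 (N : ℕ) : volume (Q0 N) = 1 := by rw [vol_cel, sd_zero]; simp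

lemma mem_Q0 {N : ℕ} {x : EN N} : x ∈ Q0 N ↔ ∀ i, - (1 / 2) ≤ x i ∧ x i < 1 / 2 := by
  simp only [Set.mem_preimage, Set.mem_singleton_iff, funext_iff, idx, sd_zero, div_one,
    Int.floor_eq_iff]
  refine forall_congr' fun i => ?_
  simp only [Pi.zero_apply, Int.cast_zero]
  constructor <;> rintro ⟨h1, h2⟩ <;> constructor <;> linarith

lemma Q0_norm {N : ℕ} {x : EN N} (h : x ∈ Q0 N) : ‖x‖ ≤ Real.sqrt N * (1 / 2) := by
  refine norm_le_sqrt (by norm_num) fun i => ?_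
  have := mem_Q0.1 h i
  rw [abs_le]; constructor <;> linarith

lemma Q0_idx {N j : ℕ} {x y : EN N} (h : idx (sd j) x = idx (sd j) y) (hy : y ∈ Q0 N) : x ∈ Q0 N := by
  have h1 := idx_mono (Nat.zero_le j) h
  have hy : idx (sd 0) y = 0 := hy
  exact h1.trans hy

/-- centre of a cell -/
def cen {N : ℕ} (j : ℕ) (k : Fin N → ℤ) : EN N :=
  WithLp.toLp 2 fun i => ((k i : ℝ) + 1 / 2) * sd j - 1 / 2

lemma ball_cen {N : ℕ} (j : ℕ) (k : Fin N → ℤ) : ball (cen j k) (sd j / 2) ⊆ cel j k := by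
  intro y hy
  have h1 : ‖y - cen j k‖ < sd j / 2 := by simpa [dist_eq_norm] using hy
  have hs := sd_pos j
  simp only [Set.mem_preimage, Set.mem_singleton_iff]
  funext i
  have h2 : |y i - (((k i : ℝ) + 1 / 2) * sd j - 1 / 2)| < sd j / 2 :=
    lt_of_le_of_lt (PiLp.norm_apply_le (y - cen j k) i) h1
  rw [abs_lt] at h2
  simp only [idx, Int.floor_eq_iff, le_div_iff₀ hs, div_lt_iff₀ hs]
  constructor <;> linarith

lemma cen_dist {N : ℕ} (j : ℕ) {x x' : EN N} (h : idx (sd j) x' = idx (sd j) x) :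
    ‖x - cen (j + 1) (idx (sd (j + 1)) x')‖ ≤ 3 / 2 * Real.sqrt N * sd (j + 1) := by
  have hs := sd_pos (j + 1)
  have hs' := sd_pos j
  have := norm_le_sqrt (x := x - cen (j + 1) (idx (sd (j + 1)) x')) (r := 3 / 2 * sd (j + 1))
    (by positivity) fun i => ?_
  · linarith
  · have h1 := congrFun h i
    simp only [idx] at h1
    have e : (x - cen (j + 1) (idx (sd (j + 1)) x')) i
        = x i - (((⌊(x' i + 1 / 2) / sd (j + 1)⌋ : ℝ) + 1 / 2) * sd (j + 1) - 1 / 2) := rfl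
    rw [e, div_sd_succ]
    set T := (x i + 1 / 2) / sd j with hT
    set T' := (x' i + 1 / 2) / sd j with hT'
    have hx : x i = T * (2 * sd (j + 1)) - 1 / 2 := by
      rw [← sd_succ, hT, div_mul_cancel₀ _ hs'.ne']; ring
    have b1 : 2 * ⌊T'⌋ ≤ ⌊2 * T'⌋ := by
      rw [Int.le_floor]; push_cast; linarith [Int.floor_le T']
    have b2 : ⌊2 * T'⌋ ≤ 2 * ⌊T'⌋ + 1 := by
      have : ⌊2 * T'⌋ < 2 * ⌊T'⌋ + 2 := by
        rw [Int.floor_lt]; push_cast; linarith [Int.lt_floor_add_one T']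
      omega
    rw [h1] at b1 b2
    have c1 : 2 * (⌊T⌋ : ℝ) ≤ ⌊2 * T'⌋ := by exact_mod_cast b1
    have c2 : (⌊2 * T'⌋ : ℝ) ≤ 2 * ⌊T⌋ + 1 := by exact_mod_cast b2
    have d1 := Int.floor_le T
    have d2 := Int.lt_floor_add_one T
    rw [hx, show T * (2 * sd (j + 1)) - 1 / 2 - (((⌊2 * T'⌋ : ℝ) + 1 / 2) * sd (j + 1) - 1 / 2)
      = (2 * T - ⌊2 * T'⌋ - 1 / 2) * sd (j + 1) by ring, abs_mul, abs_of_pos hs]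
    gcongr
    rw [abs_le]; constructor <;> linarith

lemma vol_diff_le {N : ℕ} {δ s : ℝ} (hδ : δ ≤ 1) (hs : 0 ≤ s)
    {B C E F : Set (EN N)} (hB : B ⊆ C) (hF : E ⊆ F) (hEm : MeasurableSet E)
    (hC : volume C = ENNReal.ofReal s)
    (h : ENNReal.ofReal (1 - δ) * volume C ≤ volume (E ∩ C)) :
    volume (B \ F) ≤ ENNReal.ofReal (δ * s) := by
  have h1 : volume (B \ F) ≤ volume (C \ E) := measure_mono (Set.sdiff_subset_sdiff hB hF)
  refine h1.trans ?_
  have h2 := measure_inter_add_sdiff (μ := volume) C hEm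
  rw [Set.inter_comm, hC] at h2
  rw [hC, ← ENNReal.ofReal_mul (by linarith)] at h
  have h3 : ENNReal.ofReal ((1 - δ) * s) + volume (C \ E) ≤
      ENNReal.ofReal ((1 - δ) * s) + ENNReal.ofReal (δ * s) := by
    by_cases hd : 0 ≤ δ
    · rw [← ENNReal.ofReal_add (mul_nonneg (by linarith) hs) (by positivity),
        show (1 - δ) * s + δ * s = s by ring, ← h2]
      gcongr
    · have : ENNReal.ofReal s ≤ ENNReal.ofReal ((1 - δ) * s) :=
        ENNReal.ofReal_le_ofReal (by push Not at hd; nlinarith)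
      have h4 : ENNReal.ofReal ((1 - δ) * s) + volume (C \ E) ≤ ENNReal.ofReal s := by
        rw [← h2]; gcongr
      exact h4.trans (this.trans le_self_add)
  exact (ENNReal.add_le_add_iff_left ENNReal.ofReal_ne_top).1 h3

lemma iterate {N : ℕ} {Λ β ε₁ δ γ : ℝ} (h : MTP N Λ β ε₁ δ γ) (hδ0 : 0 < δ) (hδ1 : δ < 1)
    (hγ0 : 0 < γ) (hγ1 : γ ≤ 1) (hε₁ : 0 < ε₁) {ε : ℝ} {l : ℕ} (hε : 0 < ε)
    (hεs : ε < ε₁ * sd l) {ρ : EN N → Measure (EN N)} (hρ : ∀ x, AdmM N Λ β (ρ x))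
    {u : EN N → ℝ} (hu : Measurable u) (hu0 : ∀ x, 0 ≤ u x) (hM : ∃ M, ∀ x, u x ≤ M)
    (hsup : ∀ x ∈ ball (0 : EN N) (5 * Real.sqrt N), ∫ z, u (x + ε • z) ∂ρ x ≤ u x) :
    ∀ (K : ℕ) (κ : ℝ) (E : Set (EN N)), 0 < κ → Sat l E → E ⊆ Q0 N → (∀ x ∈ E, κ ≤ u x) →
      ENNReal.ofReal ((1 - δ) ^ K) < volume E → ∀ x ∈ Q0 N, γ ^ K * κ ≤ u x := by
  intro K
  have hq0 : 0 < 1 - δ := by linarith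
  induction K with
  | zero =>
    intro κ E hκ hE hEQ huE hvol
    exfalso
    have := measure_mono (μ := volume) hEQ
    rw [vol_Q0] at this
    simp only [pow_zero, ENNReal.ofReal_one] at hvol
    exact absurd this (not_le.2 hvol)
  | succ K ih =>
    intro κ E hκ hE hEQ huE hvol
    have hEsub : E ⊆ {y | κ ≤ u y} := huE
    by_cases hbig : ENNReal.ofReal (1 - δ) * volume (Q0 N) < volume (E ∩ Q0 N)
    · intro x hx
      have h1 : γ * κ ≤ u x := by
        refine h.scaled (s := sd 0) hε (sd_pos 0)
          (lt_of_lt_of_le hεs (by have := sd_anti (Nat.zero_le l); gcongr))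
          hρ hu hu0 hM (cen 0 0) hκ ?_ ?_ ?_
        · have : (cen 0 0 : EN N) = 0 := by
            ext i; simp [cen, sd_zero]
          rw [this, sd_zero, mul_one]; exact hsup
        · exact vol_diff_le hδ1.le (by have := sd_pos 0; positivity) (ball_cen 0 0) hEsub hE.meas
            (vol_cel 0 0) hbig.le
        · have : (cen 0 0 : EN N) = 0 := by
            ext i; simp [cen, sd_zero]
          rw [this, sd_zero, sub_zero]
          have := Q0_norm hx
          have := Real.sqrt_nonneg N
          linarith
      refine le_trans ?_ h1
      have : γ ^ (K + 1) ≤ γ := pow_le_of_le_one hγ0.le hγ1 (by omega)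
      gcongr
    · push Not at hbig
      have hcz := CZ (q := ENNReal.ofReal (1 - δ)) (by rw [ENNReal.ofReal_lt_one]; linarith) hE l 0 0
        (by omega) hbig
      rw [Set.inter_eq_left.2 hEQ] at hcz
      set E' := til (ENNReal.ofReal (1 - δ)) l E ∩ cel 0 0 with hE'
      have hvol' : ENNReal.ofReal ((1 - δ) ^ K) < volume E' := by
        have h1 := lt_of_lt_of_le hvol hcz
        rw [pow_succ', ENNReal.ofReal_mul hq0.le] at h1
        exact lt_of_mul_lt_mul_left' h1
      have hE's : Sat l E' := by
        rintro x y hxy ⟨hx1, hx2⟩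
        exact ⟨til_sat _ l E x y hxy hx1, Q0_idx hxy.symm hx2⟩
      have := ih (γ * κ) E' (by positivity) hE's Set.inter_subset_right ?_ hvol'
      · intro x hx
        have := this x hx
        rwa [← mul_assoc, ← pow_succ] at this
      rintro x ⟨⟨j, hj, x', hx', hlt⟩, hxQ⟩
      have hsl := sd_anti (show j + 1 ≤ l by omega)
      have hsh : sd (j + 1) ≤ 1 / 2 := by
        have := sd_anti (show 1 ≤ j + 1 by omega)
        refine this.trans ?_
        simp [sd]
      refine h.scaled (s := sd (j + 1)) hε (sd_pos _) (lt_of_lt_of_le hεs (by gcongr)) hρ hu hu0 hM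
        (cen (j + 1) (idx (sd (j + 1)) x')) hκ ?_ ?_ (cen_dist j hx')
      · intro y hy
        refine hsup y ?_
        have hc : cen (j + 1) (idx (sd (j + 1)) x') ∈ Q0 N := by
          have h1 : (cen (j + 1) (idx (sd (j + 1)) x') : EN N) ∈ cel (j + 1) (idx (sd (j + 1)) x') :=
            ball_cen _ _ (mem_ball_self (by have := sd_pos (j + 1); positivity))
          have h1 : idx (sd (j + 1)) (cen (j + 1) (idx (sd (j + 1)) x') : EN N) = idx (sd (j + 1)) x' := h1
          exact Q0_idx h1 (Q0_idx hx' hxQ)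
        have hcn := Q0_norm hc
        rw [mem_ball, dist_eq_norm] at hy
        rw [mem_ball, dist_zero_right]
        have h3 := norm_add_le (y - cen (j + 1) (idx (sd (j + 1)) x')) (cen (j + 1) (idx (sd (j + 1)) x'))
        rw [sub_add_cancel] at h3
        have h4 : 5 * Real.sqrt N * sd (j + 1) ≤ 5 * Real.sqrt N * (1 / 2) := by gcongr
        have := Real.sqrt_nonneg N
        linarith
      · exact vol_diff_le hδ1.le (by have := sd_pos (j + 1); positivity) (ball_cen _ _) hEsub hE.meas
          (vol_cel _ _) hlt.le

lemma markov_real {N : ℕ} {Λ β : ℝ} {ρ : Measure (EN N)} (h : AdmM N Λ β ρ) (hβ : 0 < β)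
    {ε : ℝ} (hε : 0 < ε) (x : EN N) {u : EN N → ℝ} (hu : Measurable u) (hu0 : ∀ x, 0 ≤ u x)
    (hM : ∃ M, ∀ x, u x ≤ M) (hI : ∫ z, u (x + ε • z) ∂ρ ≤ u x)
    {S : Set (EN N)} (hSm : MeasurableSet S) (hS : S ⊆ ball x ε) {t : ℝ} (ht0 : 0 ≤ t)
    (ht : ∀ y ∈ S, t ≤ u y) {v : ℝ} (_hv0 : 0 ≤ v) (hv : ENNReal.ofReal v ≤ volume S) :
    t * v * β ≤ u x * (ε ^ N * (volume (ball (0 : EN N) 1)).toReal) := by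
  obtain ⟨M, hM⟩ := hM
  have hint : Integrable (fun z => u (x + ε • z)) ρ :=
    h.integrable (M := M) (hu.comp (meas_aff ε x)) fun z _ => by
      rw [abs_of_nonneg (hu0 _)]; exact hM _
  have h1 := h.markov hβ hε x hu hint (fun z _ => hu0 _) hI hSm hS ht
  have hω : volume (ball (0 : EN N) 1) = ENNReal.ofReal (volume (ball (0 : EN N) 1)).toReal :=
    (ENNReal.ofReal_toReal vB_top).symm
  have hω0 : 0 ≤ (volume (ball (0 : EN N) 1)).toReal := ENNReal.toReal_nonneg
  have hd : 0 ≤ u x / β := div_nonneg (hu0 x) hβ.le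
  rw [vol_ball hε, hω, ← ENNReal.ofReal_mul (by positivity), ← ENNReal.ofReal_mul hd] at h1
  have h2 : ENNReal.ofReal (t * v) ≤ ENNReal.ofReal t * volume S := by
    rw [ENNReal.ofReal_mul ht0]; gcongr
  have h3 := h2.trans h1
  rw [ENNReal.ofReal_le_ofReal_iff (by positivity)] at h3
  calc t * v * β ≤ (u x / β * (ε ^ N * (volume (ball (0 : EN N) 1)).toReal)) * β := by gcongr
    _ = _ := by field_simp

lemma grow {N : ℕ} {Λ β : ℝ} (hβ : 0 < β) {ε : ℝ} (hε : 0 < ε) {ρ : EN N → Measure (EN N)}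
    (hρ : ∀ x, AdmM N Λ β (ρ x)) {u : EN N → ℝ} (hu : Measurable u) (hu0 : ∀ x, 0 ≤ u x)
    (hM : ∃ M, ∀ x, u x ≤ M) (hN : 1 ≤ N)
    (hsup : ∀ x ∈ ball (0 : EN N) (5 * Real.sqrt N), ∫ z, u (x + ε • z) ∂ρ x ≤ u x)
    {y : EN N} (hy : ‖y‖ ≤ Real.sqrt N * (1 / 2)) {κ : ℝ} (hκ : 0 ≤ κ)
    (h0 : ∀ x ∈ ball y (ε / 4), κ ≤ u x) (k : ℕ) (hk : (k + 1) * ε ≤ 1) :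
    ∀ x ∈ ball y ((k + 1) * (ε / 4)), κ * (β * (1 / 4) ^ N) ^ k ≤ u x := by
  have hn1 : 1 ≤ Real.sqrt N := by
    apply Real.one_le_sqrt.2; exact_mod_cast hN
  induction k with
  | zero => intro x hx; simp at hx ⊢; exact h0 x (by simpa using hx)
  | succ k ih =>
    intro x hx
    push_cast at hk hx
    have ih := ih (by nlinarith)
    rw [mem_ball, dist_eq_norm] at hx
    have hk0 : (0 : ℝ) ≤ k := Nat.cast_nonneg k
    set x' := y + ((k : ℝ) / (k + 2)) • (x - y) with hx'
    have e1 : x' - y = ((k : ℝ) / (k + 2)) • (x - y) := by rw [hx']; abel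
    have e2 : x' - x = -(((2 : ℝ) / (k + 2)) • (x - y)) := by
      have : (2 : ℝ) / (k + 2) = 1 - (k : ℝ) / (k + 2) := by field_simp; ring
      rw [hx', this, sub_smul, one_smul]; abel
    have n1 : ‖x' - y‖ ≤ k * (ε / 4) := by
      rw [e1, norm_smul, Real.norm_of_nonneg (by positivity), div_mul_eq_mul_div,
        div_le_iff₀ (by positivity)]
      have : (k : ℝ) * ‖x - y‖ ≤ k * ((k + 1 + 1) * (ε / 4)) := by gcongr
      linarith
    have n2 : ‖x' - x‖ ≤ 2 * (ε / 4) := by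
      rw [e2, norm_neg, norm_smul, Real.norm_of_nonneg (by positivity), div_mul_eq_mul_div,
        div_le_iff₀ (by positivity)]
      linarith
    have hxb : x ∈ ball (0 : EN N) (5 * Real.sqrt N) := by
      rw [mem_ball_zero_iff]
      have : ‖x‖ ≤ ‖x - y‖ + ‖y‖ := norm_le_norm_sub_add x y
      nlinarith
    have hω0 : 0 < (volume (ball (0 : EN N) 1)).toReal := ENNReal.toReal_pos vB_pos vB_top
    have hm := markov_real (hρ x) hβ hε x hu hu0 hM (hsup x hxb)
      (S := ball x' (ε / 4)) measurableSet_ball ?_ (t := κ * (β * (1 / 4) ^ N) ^ k) (by positivity)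
      ?_ (v := (ε / 4) ^ N * (volume (ball (0 : EN N) 1)).toReal) (by positivity) ?_
    · have : (ε / 4) ^ N = (1 / 4) ^ N * ε ^ N := by rw [← mul_pow]; ring
      rw [this] at hm
      have hp : 0 < ε ^ N * (volume (ball (0 : EN N) 1)).toReal := by positivity
      refine le_of_mul_le_mul_right ?_ hp
      refine le_trans (le_of_eq ?_) hm
      rw [pow_succ]; ring
    · intro w hw
      rw [mem_ball, dist_eq_norm] at hw ⊢
      have : ‖w - x‖ ≤ ‖w - x'‖ + ‖x' - x‖ := norm_sub_le_norm_sub_add_norm_sub w x' x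
      linarith
    · intro w hw
      apply ih
      rw [mem_ball, dist_eq_norm] at hw ⊢
      have : ‖w - y‖ ≤ ‖w - x'‖ + ‖x' - y‖ := norm_sub_le_norm_sub_add_norm_sub w x' y
      linarith
    · rw [vol_ball (by positivity) x', ENNReal.ofReal_mul (by positivity), ENNReal.ofReal_toReal vB_top]

def Eset {N : ℕ} (l m : ℕ) (a : ℝ) (A : Set (EN N)) : Set (EN N) :=
  {x | x ∈ Q0 N ∧ ∃ y, idx (sd l) y = idx (sd l) x ∧
    ENNReal.ofReal a * volume (cel m (idx (sd m) y)) ≤ volume (A ∩ cel m (idx (sd m) y))}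

lemma Eset_sat {N : ℕ} (l m : ℕ) (a : ℝ) (A : Set (EN N)) : Sat l (Eset l m a A) := by
  rintro x y hxy ⟨hx, w, h1, h2⟩
  exact ⟨Q0_idx hxy.symm hx, w, h1.trans hxy, h2⟩

lemma Eset_vol {N : ℕ} (l m : ℕ) {a : ℝ} (ha : 0 < a) {A : Set (EN N)} (hA : MeasurableSet A)
    (hAQ : A ⊆ Q0 N) (hvol : ENNReal.ofReal (2 * a) ≤ volume A) :
    ENNReal.ofReal a ≤ volume (Eset l m a A) := by
  set E := Eset l m a A with hE
  have hEm : MeasurableSet E := (Eset_sat l m a A).meas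
  have h1 : volume (A \ E) ≤ ENNReal.ofReal a := by
    rw [vol_tsum (sd m) (hA.diff hEm)]
    calc ∑' k : Fin N → ℤ, volume ((A \ E) ∩ idx (sd m) ⁻¹' {k})
        ≤ ∑' k : Fin N → ℤ, ENNReal.ofReal a * volume (Q0 N ∩ idx (sd m) ⁻¹' {k}) := by
          refine ENNReal.tsum_le_tsum fun k => ?_
          rcases ((A \ E) ∩ idx (sd m) ⁻¹' {k}).eq_empty_or_nonempty with he | ⟨y, ⟨hyA, hyE⟩, hyk⟩
          · rw [he]; simp
          · have hyk : idx (sd m) y = k := hyk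
            have hsub : (cel m k : Set (EN N)) ⊆ Q0 N := fun w hw =>
              Q0_idx (j := m) (show idx (sd m) w = idx (sd m) y from Eq.trans hw hyk.symm) (hAQ hyA)
            have hlt : volume (A ∩ cel m k) < ENNReal.ofReal a * volume (cel m k : Set (EN N)) := by
              by_contra hc
              push Not at hc
              exact hyE ⟨hAQ hyA, y, rfl, by rw [hyk]; exact hc⟩
            have h2 : Q0 N ∩ idx (sd m) ⁻¹' {k} = cel m k := Set.inter_eq_right.2 hsub
            rw [h2]
            refine le_trans (measure_mono ?_) hlt.le
            exact Set.inter_subset_inter_left _ Set.sdiff_subset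
      _ = ENNReal.ofReal a * volume (Q0 N) := by
          rw [ENNReal.tsum_mul_left, ← vol_tsum (sd m) (meas_cell _ _)]
      _ = ENNReal.ofReal a := by rw [vol_Q0, mul_one]
  have h2 : volume A ≤ volume E + volume (A \ E) := by
    refine le_trans (measure_mono ?_) (measure_union_le _ _)
    intro x hx
    by_cases h : x ∈ E
    · exact Or.inl h
    · exact Or.inr ⟨hx, h⟩
  have h3 : ENNReal.ofReal a + ENNReal.ofReal a ≤ volume E + ENNReal.ofReal a := by
    rw [← ENNReal.ofReal_add ha.le ha.le, ← two_mul]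
    exact hvol.trans (h2.trans (by gcongr))
  exact (ENNReal.add_le_add_iff_right ENNReal.ofReal_ne_top).1 h3

def AN (N : ℕ) (Λ β ε₀ a c : ℝ) : Prop :=
  ∀ ε : ℝ, 0 < ε → ε < ε₀ →
    ∀ ρ : EN N → Measure (EN N), (∀ x, AdmM N Λ β (ρ x)) →
    ∀ u : EN N → ℝ, Measurable u → (∀ x, 0 ≤ u x) → (∃ M, ∀ x, u x ≤ M) →
    (∀ x ∈ ball (0 : EN N) (5 * Real.sqrt N), ∫ z, u (x + ε • z) ∂ρ x ≤ u x) →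
    ∀ A : Set (EN N), MeasurableSet A → A ⊆ Q0 N → ENNReal.ofReal a ≤ volume A →
    (∀ x ∈ A, 1 ≤ u x) → ∀ x ∈ Q0 N, c ≤ u x

theorem analytic (N : ℕ) (hN : 1 ≤ N) (Λ β : ℝ) (hΛ : 1 ≤ Λ) (hβ : 0 < β) :
    ∃ ε₀ : ℝ, 0 < ε₀ ∧ ∀ a : ℝ, 0 < a → ∃ c : ℝ, 0 < c ∧ AN N Λ β ε₀ a c := by
  obtain ⟨ε₁, δ, γ, hε₁, hδ0, hδ1, hγ0, hγ1, hmtp⟩ := meas_to_point N hN Λ β hΛ hβ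
  have hmtp : MTP N Λ β ε₁ δ γ := hmtp
  set n := Real.sqrt N with hn
  have hn1 : 1 ≤ n := by
    rw [hn]; apply Real.one_le_sqrt.2; exact_mod_cast hN
  obtain ⟨M, hMM⟩ := exists_pow_lt_of_lt_one (show 0 < ε₁ / (16 * n) by positivity)
    (show (1 / 2 : ℝ) < 1 by norm_num)
  have hMM : sd M < ε₁ / (16 * n) := hMM
  set k := ⌈16 * n / ε₁⌉₊ with hk
  have hk1 : 16 * n / ε₁ ≤ k := Nat.le_ceil _
  have hkpos : (0 : ℝ) < k + 1 := by positivity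
  have hω0 : 0 < (volume (ball (0 : EN N) 1)).toReal := ENNReal.toReal_pos vB_pos vB_top
  have hsM := sd_pos M
  refine ⟨min (ε₁ / 2) (1 / (k + 1)), by positivity, fun a ha => ?_⟩
  obtain ⟨K, hK⟩ := exists_pow_lt_of_lt_one (show 0 < a / 2 by positivity)
    (show 1 - δ < 1 by linarith)
  set q := 2 / ε₁ * sd M with hq
  have hq0 : 0 < q := by positivity
  set κ := β * (a / 2) * q ^ N / (volume (ball (0 : EN N) 1)).toReal with hκ
  have hκ0 : 0 < κ := by positivity
  refine ⟨γ ^ K * (κ * (β * (1 / 4) ^ N) ^ k), by positivity, ?_⟩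
  intro ε hε hεε ρ hρ u hu hu0 hM hsup A hA hAQ hvol huA
  have hεa : ε < ε₁ / 2 := lt_of_lt_of_le hεε (min_le_left _ _)
  have hεb : ε < 1 / (k + 1) := lt_of_lt_of_le hεε (min_le_right _ _)
  have hkε : (k + 1) * ε ≤ 1 := by
    rw [lt_div_iff₀ hkpos] at hεb; linarith
  have hε1 : ε ≤ 1 := by
    have : (0 : ℝ) ≤ k := Nat.cast_nonneg k
    nlinarith
  obtain ⟨l, hl1, hl2⟩ := exists_nat_pow_near_of_lt_one (x := 2 * ε / ε₁) (y := 1 / 2)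
    (by positivity) (by rw [div_le_one hε₁]; linarith) (by norm_num) (by norm_num)
  have hl1 : sd (l + 1) < 2 * ε / ε₁ := hl1
  have hl2 : 2 * ε / ε₁ ≤ sd l := hl2
  have hls : sd l < 4 * ε / ε₁ := by
    rw [sd_succ]; calc 2 * sd (l + 1) < 2 * (2 * ε / ε₁) := by gcongr
      _ = _ := by ring
  have hεl : ε < ε₁ * sd l := by
    rw [div_le_iff₀ hε₁] at hl2; linarith
  have hsl := sd_pos l
  have hsm : sd (l + M) = sd l * sd M := by unfold sd; rw [pow_add]
  have hm1 : q * ε ≤ sd (l + M) := by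
    rw [hsm, hq]
    calc 2 / ε₁ * sd M * ε = (2 * ε / ε₁) * sd M := by ring
      _ ≤ _ := by gcongr
  have hm2 : n * sd (l + M) < ε / 4 := by
    rw [hsm]
    calc n * (sd l * sd M) < n * ((4 * ε / ε₁) * (ε₁ / (16 * n))) := by gcongr
      _ = ε / 4 := by field_simp; norm_num
  have hmpos := sd_pos (l + M)
  refine iterate hmtp hδ0 hδ1 hγ0 hγ1 hε₁ hε hεl hρ hu hu0 hM hsup K _ (Eset l (l + M) (a / 2) A)
    (by positivity) (Eset_sat _ _ _ _) (fun x hx => hx.1) ?_ ?_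
  · rintro x ⟨hxQ, y, hyx, hyv⟩
    have hyQ : y ∈ Q0 N := Q0_idx hyx hxQ
    have hyn := Q0_norm hyQ
    refine grow hβ hε hρ hu hu0 hM hN hsup hyn hκ0.le ?_ k hkε x ?_
    · intro w hw
      rw [mem_ball, dist_eq_norm] at hw
      have hwb : w ∈ ball (0 : EN N) (5 * Real.sqrt N) := by
        rw [mem_ball_zero_iff]
        have : ‖w‖ ≤ ‖w - y‖ + ‖y‖ := norm_le_norm_sub_add w y
        linarith
      have hm := markov_real (hρ w) hβ hε w hu hu0 hM (hsup w hwb)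
        (S := A ∩ cel (l + M) (idx (sd (l + M)) y)) (hA.inter (meas_cell _ _)) ?_ (t := 1) (by norm_num)
        (fun z hz => huA z hz.1) (v := a / 2 * (q * ε) ^ N) (by positivity) ?_
      · have hp : 0 < ε ^ N * (volume (ball (0 : EN N) 1)).toReal := by positivity
        refine le_of_mul_le_mul_right ?_ hp
        refine le_trans (le_of_eq ?_) hm
        rw [hκ, mul_pow q ε N]; field_simp
      · rintro z ⟨-, hz⟩
        have := idx_dist (sd_pos (l + M)) (show idx (sd (l + M)) z = idx (sd (l + M)) y from hz)
        rw [mem_ball, dist_eq_norm]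
        have h2 : ‖z - w‖ ≤ ‖z - y‖ + ‖y - w‖ := norm_sub_le_norm_sub_add_norm_sub z y w
        rw [norm_sub_rev y w] at h2
        linarith
      · refine le_trans ?_ hyv
        rw [vol_cel, ENNReal.ofReal_mul (by positivity)]
        gcongr
    · have := idx_dist hsl hyx
      rw [mem_ball, dist_eq_norm, norm_sub_rev]
      refine lt_of_le_of_lt this ?_
      calc Real.sqrt N * sd l ≤ n * (4 * ε / ε₁) := by gcongr
        _ = (16 * n / ε₁) * (ε / 4) := by field_simp; norm_num
        _ ≤ k * (ε / 4) := by gcongr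
        _ < (k + 1) * (ε / 4) := by linarith
  · refine lt_of_lt_of_le ?_ (Eset_vol l (l + M) (by positivity) hA hAQ ?_)
    · exact (ENNReal.ofReal_lt_ofReal_iff (by positivity)).2 hK
    · rwa [mul_div_cancel₀ _ (by norm_num : (2 : ℝ) ≠ 0)]

lemma uB_neg (N : ℕ) : (uB N).IsNegInvariant := by
  constructor
  show Measure.map Neg.neg (uB N) = uB N
  ext s hs
  rw [Measure.map_apply measurable_neg hs]
  simp only [uB, Measure.smul_apply]
  rw [Measure.restrict_apply hs, Measure.restrict_apply (measurable_neg hs)]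
  congr 1
  have : Neg.neg ⁻¹' s ∩ ball (0 : EN N) 1 = Neg.neg ⁻¹' (s ∩ ball (0 : EN N) 1) := by
    ext z; simp
  rw [this]
  exact (Measure.measurePreserving_neg (volume : Measure (EN N))).measure_preimage
    (hs.inter measurableSet_ball).nullMeasurableSet

def mixM (N : ℕ) (β : ℝ) (ν : Measure (EN N)) : Measure (EN N) :=
  ENNReal.ofReal (1 - β) • ν + ENNReal.ofReal β • uB N

lemma mixM_adm {N : ℕ} {Λ β : ℝ} (hΛ : 1 ≤ Λ) (hβ : β ∈ Set.Ioc (0 : ℝ) 1) {ν : Measure (EN N)}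
    (h1 : IsProbabilityMeasure ν) (h2 : ν (closedBall (0 : EN N) Λ)ᶜ = 0)
    (h3 : ∀ E : Set (EN N), MeasurableSet E → ν E = ν (-E)) : AdmM N Λ β (mixM N β ν) := by
  have hu := uB_prob N
  refine ⟨⟨?_⟩, ?_, ⟨?_⟩, ?_⟩
  · simp only [mixM, Measure.add_apply, Measure.smul_apply, measure_univ, smul_eq_mul, mul_one]
    rw [← ENNReal.ofReal_add (by linarith [hβ.2]) hβ.1.le]; simp
  · simp only [mixM, Measure.add_apply, Measure.smul_apply, h2, smul_eq_mul, mul_zero, zero_add]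
    have : uB N (closedBall (0 : EN N) Λ)ᶜ = 0 := by
      simp only [uB, Measure.smul_apply, smul_eq_mul]
      rw [Measure.restrict_apply measurableSet_closedBall.compl]
      have : (closedBall (0 : EN N) Λ)ᶜ ∩ ball 0 1 = ∅ := by
        ext z
        simp only [Set.mem_inter_iff, Set.mem_compl_iff, mem_closedBall_zero_iff, mem_ball_zero_iff,
          Set.mem_empty_iff_false, iff_false, not_and]
        intro h; linarith
      rw [this]; simp
    rw [this, mul_zero]
  · show Measure.map Neg.neg (mixM N β ν) = mixM N β ν
    have hub : Measure.map Neg.neg (uB N) = uB N := (uB_neg N).1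
    have hnu : Measure.map Neg.neg ν = ν := by
      ext s hs
      rw [Measure.map_apply measurable_neg hs, h3 s hs]; rfl
    rw [mixM, Measure.map_add _ _ measurable_neg, Measure.map_smul, Measure.map_smul, hub, hnu]
  · exact Measure.le_add_left le_rfl

lemma int_bdd {N : ℕ} {ρ : Measure (EN N)} [IsFiniteMeasure ρ] {g : EN N → ℝ} (hg : Measurable g)
    (hb : ∃ M, ∀ y, |g y| ≤ M) (ε : ℝ) (x : EN N) : Integrable (fun z => g (x + ε • z)) ρ := by
  obtain ⟨M, hM⟩ := hb
  exact Integrable.of_bound (hg.comp (meas_aff ε x)).aestronglyMeasurable M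
    (Filter.Eventually.of_forall fun z => hM _)

lemma mixM_int {N : ℕ} {β : ℝ} (hβ : β ∈ Set.Ioc (0 : ℝ) 1) {ν : Measure (EN N)}
    (h1 : IsProbabilityMeasure ν) {ε : ℝ} (hε : 0 < ε) (x : EN N) {g : EN N → ℝ} (hg : Measurable g)
    (hb : ∃ M, ∀ y, |g y| ≤ M) :
    (1 - β) * ∫ z, g (x + ε • z) ∂ν + β * ⨍ y in ball x ε, g y
      = ∫ z, g (x + ε • z) ∂(mixM N β ν) := by
  have hu := uB_prob N
  rw [uB_avg hε x g hg, mixM, integral_add_measure, integral_smul_measure, integral_smul_measure,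
    ENNReal.toReal_ofReal (by linarith [hβ.2]), ENNReal.toReal_ofReal hβ.1.le]
  · rfl
  · exact (int_bdd hg hb ε x).smul_measure ENNReal.ofReal_ne_top
  · exact (int_bdd hg hb ε x).smul_measure ENNReal.ofReal_ne_top

lemma nu_meas {N : ℕ} {ν : EN N → Measure (EN N)} (h1 : ∀ x, IsProbabilityMeasure (ν x))
    (h : ∀ w : EN N → ℝ, Measurable w → (∃ M, ∀ y, |w y| ≤ M) →
          Measurable fun x => ∫ z, w (x + z) ∂ν x) (ε : ℝ) {g : EN N → ℝ} (hg : Measurable g) :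
    Measurable fun x => ∫ z, g (x + ε • z) ∂ν x := by
  have hadd : ∀ x : EN N, Measurable fun z : EN N => x + z := fun x => measurable_const_add x
  let κ : ProbabilityTheory.Kernel (EN N) (EN N) :=
    { toFun := fun x => (ν x).map (fun z => x + z)
      measurable' := by
        refine Measure.measurable_of_measurable_coe _ fun s hs => ?_
        have e : (fun x => (ν x).map (fun z => x + z) s)
            = fun x => ENNReal.ofReal (∫ z, s.indicator (fun _ => (1 : ℝ)) (x + z) ∂ν x) := by
          funext x
          rw [Measure.map_apply (hadd x) hs]
          have : (fun z => s.indicator (fun _ => (1 : ℝ)) (x + z))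
              = ((fun z => x + z) ⁻¹' s).indicator (fun _ => (1 : ℝ)) := by
            funext z; rfl
          rw [this, integral_indicator_const _ (hadd x hs)]
          simp [Measure.real]
        rw [e]
        refine (h _ (measurable_const.indicator hs) ⟨1, fun y => ?_⟩).ennreal_ofReal
        by_cases hy : y ∈ s <;> simp [hy] }
  have hκ : ProbabilityTheory.IsMarkovKernel κ :=
    ⟨fun x => (Measure.isProbabilityMeasure_map (hadd x).aemeasurable : _)⟩
  have e : (fun x => ∫ z, g (x + ε • z) ∂ν x) = fun x => ∫ y, g (x + ε • (y - x)) ∂κ x := by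
    funext x
    have hm : Measurable fun y : EN N => g (x + ε • (y - x)) :=
      hg.comp ((meas_aff ε x).comp (measurable_id.sub_const x))
    show _ = ∫ y, g (x + ε • (y - x)) ∂(ν x).map (fun z => x + z)
    rw [integral_map (hadd x).aemeasurable hm.aestronglyMeasurable]
    simp
  rw [e]
  have hm : Measurable fun p : EN N × EN N => g (p.1 + ε • (p.2 - p.1)) :=
    hg.comp (measurable_fst.add ((measurable_snd.sub measurable_fst).const_smul ε))
  exact (hm.stronglyMeasurable.integral_kernel_prod_right' (κ := κ)).measurable

lemma mixM_meas {N : ℕ} {β : ℝ} {ν : EN N → Measure (EN N)} (hβ : β ∈ Set.Ioc (0 : ℝ) 1)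
    (h1 : ∀ x, IsProbabilityMeasure (ν x))
    (h : ∀ w : EN N → ℝ, Measurable w → (∃ M, ∀ y, |w y| ≤ M) →
          Measurable fun x => ∫ z, w (x + z) ∂ν x) {ε : ℝ} (hε : 0 < ε) {g : EN N → ℝ}
    (hg : Measurable g) (hb : ∃ M, ∀ y, |g y| ≤ M) :
    Measurable fun x => ∫ z, g (x + ε • z) ∂(mixM N β (ν x)) := by
  have hu := uB_prob N
  have e : (fun x => ∫ z, g (x + ε • z) ∂(mixM N β (ν x)))
      = fun x => (1 - β) * ∫ z, g (x + ε • z) ∂ν x + β * ∫ z, g (x + ε • z) ∂uB N := by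
    funext x
    rw [← mixM_int hβ (h1 x) hε x hg hb, uB_avg hε x g hg]
  rw [e]
  refine ((nu_meas h1 h ε hg).const_mul _).add (Measurable.const_mul ?_ _)
  have hm : Measurable fun p : EN N × EN N => g (p.1 + ε • p.2) :=
    hg.comp (measurable_fst.add (measurable_snd.const_smul ε))
  exact (hm.stronglyMeasurable.integral_prod_right' (ν := uB N)).measurable

/-- value iteration for the hitting probability -/
def uS {N : ℕ} (ε : ℝ) (ρ : EN N → Measure (EN N)) (A D : Set (EN N)) : ℕ → EN N → ℝ
  | 0 => A.indicator fun _ => 1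
  | n + 1 => fun x => A.indicator (fun _ => 1) x
      + (D \ A).indicator (fun x => ∫ z, uS ε ρ A D n (x + ε • z) ∂ρ x) x

section US
variable {N : ℕ} {ε : ℝ} {ρ : EN N → Measure (EN N)} {A D : Set (EN N)}

lemma uS_A (n : ℕ) {x : EN N} (hx : x ∈ A) : uS ε ρ A D n x = 1 := by
  cases n <;> simp [uS, hx]

lemma uS_D (n : ℕ) {x : EN N} (hx : x ∈ D \ A) :
    uS ε ρ A D (n + 1) x = ∫ z, uS ε ρ A D n (x + ε • z) ∂ρ x := by
  simp [uS, hx.1, hx.2]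

lemma uS_O (n : ℕ) {x : EN N} (hx : x ∉ A) (hx' : x ∉ D \ A) : uS ε ρ A D n x = 0 := by
  cases n
  · simp [uS, hx]
  · simp only [uS]; rw [Set.indicator_of_notMem hx, Set.indicator_of_notMem hx', add_zero]

lemma uS_props (hA : MeasurableSet A) (hD : MeasurableSet D)
    (hρ : ∀ x, IsProbabilityMeasure (ρ x))
    (hm : ∀ g : EN N → ℝ, Measurable g → (∃ M, ∀ y, |g y| ≤ M) →
      Measurable fun x => ∫ z, g (x + ε • z) ∂ρ x) (n : ℕ) :
    Measurable (uS ε ρ A D n) ∧ ∀ x, 0 ≤ uS ε ρ A D n x ∧ uS ε ρ A D n x ≤ 1 := by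
  induction n with
  | zero =>
    refine ⟨measurable_const.indicator hA, fun x => ?_⟩
    by_cases hx : x ∈ A <;> simp [uS, hx]
  | succ n ih =>
    obtain ⟨ih1, ih2⟩ := ih
    have hb : ∃ M, ∀ y, |uS ε ρ A D n y| ≤ M := ⟨1, fun y => by
      rw [abs_of_nonneg (ih2 y).1]; exact (ih2 y).2⟩
    refine ⟨(measurable_const.indicator hA).add ((hm _ ih1 hb).indicator (hD.diff hA)), fun x => ?_⟩
    by_cases hx : x ∈ A
    · rw [uS_A _ hx]; norm_num
    by_cases hx' : x ∈ D \ A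
    · rw [uS_D _ hx']
      refine ⟨integral_nonneg fun z => (ih2 _).1, ?_⟩
      calc _ ≤ ∫ _z, (1 : ℝ) ∂ρ x :=
            integral_mono (int_bdd ih1 hb ε x) (integrable_const _) fun z => (ih2 _).2
        _ = 1 := by simp
    · rw [uS_O _ hx hx']; norm_num

lemma uS_mono (hA : MeasurableSet A) (hD : MeasurableSet D)
    (hρ : ∀ x, IsProbabilityMeasure (ρ x))
    (hm : ∀ g : EN N → ℝ, Measurable g → (∃ M, ∀ y, |g y| ≤ M) →
      Measurable fun x => ∫ z, g (x + ε • z) ∂ρ x) (n : ℕ) :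
    ∀ x, uS ε ρ A D n x ≤ uS ε ρ A D (n + 1) x := by
  have P := uS_props hA hD hρ hm
  have hb : ∀ n, ∃ M, ∀ y, |uS ε ρ A D n y| ≤ M := fun n => ⟨1, fun y => by
      rw [abs_of_nonneg ((P n).2 y).1]; exact ((P n).2 y).2⟩
  induction n with
  | zero =>
    intro x
    by_cases hx : x ∈ A
    · rw [uS_A _ hx, uS_A _ hx]
    · have : uS ε ρ A D 0 x = 0 := by simp [uS, hx]
      rw [this]; exact ((P _).2 x).1
  | succ n ih =>
    intro x
    by_cases hx : x ∈ A
    · rw [uS_A _ hx, uS_A _ hx]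
    by_cases hx' : x ∈ D \ A
    · rw [uS_D _ hx', uS_D _ hx']
      exact integral_mono (int_bdd (P n).1 (hb _) ε x) (int_bdd (P (n + 1)).1 (hb _) ε x)
        fun z => ih _
    · rw [uS_O _ hx hx', uS_O _ hx hx']

lemma uS_lim (hA : MeasurableSet A) (hD : MeasurableSet D)
    (hρ : ∀ x, IsProbabilityMeasure (ρ x))
    (hm : ∀ g : EN N → ℝ, Measurable g → (∃ M, ∀ y, |g y| ≤ M) →
      Measurable fun x => ∫ z, g (x + ε • z) ∂ρ x) :
    ∃ u : EN N → ℝ, Measurable u ∧ (∀ x, 0 ≤ u x) ∧ (∀ x, u x ≤ 1) ∧ (∀ x ∈ A, 1 ≤ u x) ∧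
      (∀ x ∈ D, ∫ z, u (x + ε • z) ∂ρ x ≤ u x) ∧
      ∀ x, Filter.Tendsto (fun n => uS ε ρ A D n x) Filter.atTop (nhds (u x)) := by
  have P := uS_props hA hD hρ hm
  have hmono : ∀ x, Monotone fun n => uS ε ρ A D n x := fun x =>
    monotone_nat_of_le_succ fun n => uS_mono hA hD hρ hm n x
  have hT : ∀ x, ∃ t, Filter.Tendsto (fun n => uS ε ρ A D n x) Filter.atTop (nhds t) := fun x =>
    ⟨_, tendsto_atTop_ciSup (hmono x) ⟨1, by rintro _ ⟨n, rfl⟩; exact ((P n).2 x).2⟩⟩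
  choose u hu using hT
  have hum : Measurable u := measurable_of_tendsto_metrizable (fun n => (P n).1) (tendsto_pi_nhds.2 hu)
  have hu0 : ∀ x, 0 ≤ u x := fun x => ge_of_tendsto' (hu x) fun n => ((P n).2 x).1
  have hu1 : ∀ x, u x ≤ 1 := fun x => le_of_tendsto' (hu x) fun n => ((P n).2 x).2
  have huA : ∀ x ∈ A, 1 ≤ u x := fun x hx => ge_of_tendsto' (hu x) fun n => (uS_A n hx).ge
  refine ⟨u, hum, hu0, hu1, huA, fun x hx => ?_, hu⟩
  by_cases hxA : x ∈ A
  · refine le_trans ?_ (huA x hxA)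
    calc _ ≤ ∫ _z, (1 : ℝ) ∂ρ x :=
          integral_mono (int_bdd hum ⟨1, fun y => by rw [abs_of_nonneg (hu0 y)]; exact hu1 y⟩ ε x)
            (integrable_const _) fun z => hu1 _
      _ = 1 := by simp
  · have h1 : Filter.Tendsto (fun n => ∫ z, uS ε ρ A D n (x + ε • z) ∂ρ x) Filter.atTop
        (nhds (∫ z, u (x + ε • z) ∂ρ x)) := by
      refine tendsto_integral_of_dominated_convergence (fun _ => 1)
        (fun n => ((P n).1.comp (meas_aff ε x)).aestronglyMeasurable) (integrable_const _) ?_ ?_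
      · intro n
        refine Filter.Eventually.of_forall fun z => ?_
        rw [Real.norm_of_nonneg ((P n).2 _).1]; exact ((P n).2 _).2
      · exact Filter.Eventually.of_forall fun z => hu _
    have h2 := (hu x).comp (Filter.tendsto_add_atTop_nat 1)
    refine (tendsto_nhds_unique h1 (h2.congr fun n => ?_)).le
    exact uS_D n ⟨hx, hxA⟩

end US

/-- the process has stayed in `D \ A` before time `k` -/
def stS {N : ℕ} {Ω : Type} (X : ℕ → Ω → EN N) (A D : Set (EN N)) (k : ℕ) : Set Ω :=
  {ω | ∀ j < k, X j ω ∈ D \ A}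

def evS {N : ℕ} {Ω : Type} (X : ℕ → Ω → EN N) (A D : Set (EN N)) : Set Ω :=
  {ω | ∃ k : ℕ, X k ω ∈ A ∧ ∀ j < k, X j ω ∈ D}

lemma proc_bound {N : ℕ} {ε : ℝ} {ρ : EN N → Measure (EN N)} {A D : Set (EN N)}
    (hA : MeasurableSet A) (hD : MeasurableSet D)
    (hρ : ∀ x, IsProbabilityMeasure (ρ x))
    (hm : ∀ g : EN N → ℝ, Measurable g → (∃ M, ∀ y, |g y| ≤ M) →
      Measurable fun x => ∫ z, g (x + ε • z) ∂ρ x)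
    {Ω : Type} {m0 : MeasurableSpace Ω} {μ : Measure Ω} [IsProbabilityMeasure μ]
    {𝔉 : Filtration ℕ m0} {X : ℕ → Ω → EN N} (hX : Adapted 𝔉 X)
    (hc : ∀ (k : ℕ) (g : EN N → ℝ), Measurable g → (∃ M, ∀ y, |g y| ≤ M) →
          (μ[(fun ω => g (X (k + 1) ω)) | 𝔉 k]) =ᵐ[μ]
            fun ω => ∫ z, g (X k ω + ε • z) ∂ρ (X k ω)) (n : ℕ) :
    ∀ k, ∫ ω in stS X A D k, uS ε ρ A D n (X k ω) ∂μ ≤ μ.real (stS X A D k ∩ evS X A D) := by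
  have P := uS_props hA hD hρ hm
  have hXm : ∀ k, Measurable (X k) := fun k => (hX k).mono (𝔉.le k) le_rfl
  have hst : ∀ k i, k ≤ i + 1 → MeasurableSet[𝔉 i] (stS X A D k) := by
    intro k i hki
    have : stS X A D k = ⋂ j, ⋂ (_ : j < k), X j ⁻¹' (D \ A) := by
      ext ω; simp [stS]
    rw [this]
    refine MeasurableSet.iInter fun j => MeasurableSet.iInter fun hj => ?_
    exact 𝔉.mono (show j ≤ i by omega) _ (hX j (hD.diff hA))
  have hst0 : ∀ k, MeasurableSet (stS X A D k) := fun k => 𝔉.le k _ (hst k k (by omega))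
  have hev : MeasurableSet (evS X A D) := by
    have : evS X A D = ⋃ k, (X k ⁻¹' A ∩ ⋂ j, ⋂ (_ : j < k), X j ⁻¹' D) := by
      ext ω; simp [evS]
    rw [this]
    refine MeasurableSet.iUnion fun k => (hXm k hA).inter ?_
    exact MeasurableSet.iInter fun j => MeasurableSet.iInter fun hj => hXm j hD
  have hsucc : ∀ k, stS X A D (k + 1) = stS X A D k ∩ X k ⁻¹' (D \ A) := by
    intro k; ext ω
    simp only [stS, Set.mem_ofPred_eq, Set.mem_inter_iff, Set.mem_preimage]
    constructor
    · intro h; exact ⟨fun j hj => h j (by omega), h k (by omega)⟩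
    · rintro ⟨h1, h2⟩ j hj
      rcases Nat.lt_succ_iff_lt_or_eq.1 hj with h | rfl
      · exact h1 j h
      · exact h2
  have hint : ∀ n k, Integrable (fun ω => uS ε ρ A D n (X k ω)) μ := fun n k =>
    Integrable.of_bound ((P n).1.comp (hXm k)).aestronglyMeasurable 1
      (Filter.Eventually.of_forall fun ω => by
        rw [Real.norm_of_nonneg ((P n).2 _).1]; exact ((P n).2 _).2)
  have hsubA : ∀ k, stS X A D k ∩ X k ⁻¹' A ⊆ evS X A D := by
    rintro k ω ⟨h1, h2⟩
    exact ⟨k, h2, fun j hj => (h1 j hj).1⟩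
  -- decomposition
  have hdec : ∀ n k, ∫ ω in stS X A D k, uS ε ρ A D n (X k ω) ∂μ
      = μ.real (stS X A D k ∩ X k ⁻¹' A) + ∫ ω in stS X A D (k + 1), uS ε ρ A D n (X k ω) ∂μ := by
    intro n k
    have e : ∀ ω, uS ε ρ A D n (X k ω) = (X k ⁻¹' A).indicator (fun _ => (1 : ℝ)) ω
        + (X k ⁻¹' (D \ A)).indicator (fun ω => uS ε ρ A D n (X k ω)) ω := by
      intro ω
      by_cases h1 : X k ω ∈ A
      · rw [uS_A n h1]; simp [h1]
      by_cases h2 : X k ω ∈ D \ A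
      · rw [Set.indicator_of_notMem (by exact h1), Set.indicator_of_mem (by exact h2), zero_add]
      · rw [uS_O n h1 h2, Set.indicator_of_notMem (by exact h1), Set.indicator_of_notMem (by exact h2),
          zero_add]
    rw [setIntegral_congr_fun (hst0 k) fun ω _ => e ω, integral_add, integral_indicator (hXm k hA),
      integral_indicator (hXm k (hD.diff hA)), Measure.restrict_restrict (hXm k hA),
      Measure.restrict_restrict (hXm k (hD.diff hA)), hsucc, Set.inter_comm (X k ⁻¹' (D \ A)),
      Set.inter_comm (X k ⁻¹' A)]
    · simp
    · exact ((integrable_const _).indicator (hXm k hA))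
    · exact ((hint n k).integrableOn.integrable.indicator (hXm k (hD.diff hA)))
  induction n with
  | zero =>
    intro k
    rw [hdec]
    have : ∫ ω in stS X A D (k + 1), uS ε ρ A D 0 (X k ω) ∂μ = 0 := by
      refine setIntegral_eq_zero_of_forall_eq_zero fun ω hω => ?_
      have := (hω k (by omega)).2
      simp [uS, this]
    rw [this, add_zero]
    exact measureReal_mono (Set.subset_inter Set.inter_subset_left (hsubA k))
  | succ n ih =>
    intro k
    have hb : ∃ M, ∀ y, |uS ε ρ A D n y| ≤ M := ⟨1, fun y => by
      rw [abs_of_nonneg ((P n).2 y).1]; exact ((P n).2 y).2⟩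
    have h1 : ∫ ω in stS X A D (k + 1), uS ε ρ A D (n + 1) (X k ω) ∂μ
        = ∫ ω in stS X A D (k + 1), uS ε ρ A D n (X (k + 1) ω) ∂μ := by
      rw [← setIntegral_condExp (𝔉.le k) (hint n (k + 1)) (hst (k + 1) k le_rfl)]
      refine setIntegral_congr_ae (hst0 (k + 1)) ?_
      filter_upwards [hc k _ (P n).1 hb] with ω hω hωs
      rw [hω, uS_D n (hωs k (by omega))]
    rw [hdec, h1]
    have h2 := ih (k + 1)
    have hdisj : Disjoint (stS X A D k ∩ X k ⁻¹' A) (stS X A D (k + 1) ∩ evS X A D) := by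
      rw [Set.disjoint_left]
      rintro ω ⟨-, h1⟩ ⟨h2, -⟩
      exact (h2 k (by omega)).2 h1
    have h3 := measureReal_union (μ := μ) hdisj ((hst0 (k + 1)).inter hev)
    have h4 : μ.real (stS X A D k ∩ X k ⁻¹' A ∪ stS X A D (k + 1) ∩ evS X A D)
        ≤ μ.real (stS X A D k ∩ evS X A D) := by
      refine measureReal_mono ?_
      refine Set.union_subset (Set.subset_inter Set.inter_subset_left (hsubA k)) ?_
      rw [hsucc]
      exact Set.inter_subset_inter_left _ Set.inter_subset_left
    linarith

lemma cube_meas (N : ℕ) (r : ℝ) : MeasurableSet (cubeO N r) := by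
  have : cubeO N r = ⋂ i, {x : EN N | |x i| < r / 2} := by
    ext x; simp [cubeO]
  rw [this]
  refine MeasurableSet.iInter fun i => ?_
  have hm : Measurable fun x : EN N => |x i| := by fun_prop
  exact measurableSet_lt hm measurable_const

theorem reach_positive_measure (N : ℕ) (hN : 1 ≤ N) (Λ β : ℝ) (hΛ : 1 ≤ Λ)
    (hβ : β ∈ Set.Ioc (0 : ℝ) 1) :
    ∃ (ε₀ : ℝ) (φ : ℝ → ℝ), 0 < ε₀ ∧
      (∀ a ∈ Set.Ioo (0 : ℝ) 1, φ a ∈ Set.Ioo (0 : ℝ) 1) ∧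
      MonotoneOn φ (Set.Ioo (0 : ℝ) 1) ∧
      ∀ ε : ℝ, 0 < ε → ε < ε₀ →
      ∀ (ν : EuclideanSpace ℝ (Fin N) → Measure (EuclideanSpace ℝ (Fin N))),
        (∀ x, IsProbabilityMeasure (ν x)) →
        (∀ x, ν x (closedBall (0 : EuclideanSpace ℝ (Fin N)) Λ)ᶜ = 0) →
        (∀ x (E : Set (EuclideanSpace ℝ (Fin N))), MeasurableSet E → ν x E = ν x (-E)) →
        (∀ w : EuclideanSpace ℝ (Fin N) → ℝ, Measurable w → (∃ M, ∀ y, |w y| ≤ M) →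
          Measurable fun x => ∫ z, w (x + z) ∂ν x) →
      ∀ (A : Set (EuclideanSpace ℝ (Fin N))), MeasurableSet A → A ⊆ cubeO N 1 →
        0 < volume A →
      ∀ x ∈ cubeO N 1,
      ∀ (Ωhat : Type) [m0 : MeasurableSpace Ωhat] (μ : Measure Ωhat),
        IsProbabilityMeasure μ →
      ∀ (𝔉 : Filtration ℕ m0) (X : ℕ → Ωhat → EuclideanSpace ℝ (Fin N)),
        Adapted 𝔉 X → (∀ᵐ ω ∂μ, X 0 ω = x) →
        (∀ (k : ℕ) (g : EuclideanSpace ℝ (Fin N) → ℝ), Measurable g →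
          (∃ M, ∀ y, |g y| ≤ M) →
          (μ[(fun ω => g (X (k + 1) ω)) | 𝔉 k]) =ᵐ[μ]
            fun ω => (1 - β) * ∫ z, g (X k ω + ε • z) ∂ν (X k ω) +
              β * ⨍ y in ball (X k ω) ε, g y) →
        ENNReal.ofReal (φ (volume A).toReal) <
          μ {ω | ∃ k : ℕ, X k ω ∈ A ∧
            ∀ j < k, X j ω ∈ cubeO N (10 * Real.sqrt N)} := by
  obtain ⟨ε₀, hε₀, han⟩ := analytic N hN Λ β hΛ hβ.1
  set F : ℝ → Set ℝ := fun a => {c | 0 < c ∧ c ≤ 1 / 2 ∧ AN N Λ β ε₀ a c} with hF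
  have hFne : ∀ a, 0 < a → ∃ c, c ∈ F a := by
    intro a ha
    obtain ⟨c, hc, h⟩ := han a ha
    refine ⟨min c (1 / 2), by positivity, min_le_right _ _, ?_⟩
    intro ε h1 h2 ρ h3 u h4 h5 h6 h7 A h8 h9 h10 h11 x hx
    exact (min_le_left _ _).trans (h ε h1 h2 ρ h3 u h4 h5 h6 h7 A h8 h9 h10 h11 x hx)
  have hFb : ∀ a, BddAbove (F a) := fun a => ⟨1 / 2, fun c hc => hc.2.1⟩
  have hFmono : ∀ a b, a ≤ b → F a ⊆ F b := by
    rintro a b hab c ⟨h0, h1, h⟩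
    refine ⟨h0, h1, ?_⟩
    intro ε h1 h2 ρ h3 u h4 h5 h6 h7 A h8 h9 h10 h11 x hx
    exact h ε h1 h2 ρ h3 u h4 h5 h6 h7 A h8 h9 ((ENNReal.ofReal_le_ofReal hab).trans h10) h11 x hx
  have hpos : ∀ a, 0 < a → 0 < sSup (F a) := by
    intro a ha
    obtain ⟨c, hc⟩ := hFne a ha
    exact lt_of_lt_of_le hc.1 (le_csSup (hFb a) hc)
  refine ⟨ε₀, fun a => sSup (F a) / 2, hε₀, ?_, ?_, ?_⟩
  · intro a ha
    have h1 := hpos a ha.1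
    have h2 : sSup (F a) ≤ 1 / 2 := csSup_le (hFne a ha.1) fun c hc => hc.2.1
    constructor
    · show 0 < sSup (F a) / 2
      positivity
    · show sSup (F a) / 2 < 1
      linarith
  · intro a ha b hb hab
    have := csSup_le_csSup (hFb b) (hFne a ha.1) (hFmono a b hab)
    show sSup (F a) / 2 ≤ sSup (F b) / 2
    linarith
  intro ε hε hεε ν hν1 hν2 hν3 hν4 A hA hAQ hA0 x hx Ωhat m0 μ hμ 𝔉 X hX hX0 hc
  set D := cubeO N (10 * Real.sqrt N) with hDdef
  have hD : MeasurableSet D := cube_meas _ _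
  set ρ : EN N → Measure (EN N) := fun x => mixM N β (ν x) with hρdef
  have hρ : ∀ x, AdmM N Λ β (ρ x) := fun x => mixM_adm hΛ hβ (hν1 x) (hν2 x) (hν3 x)
  have hρ1 : ∀ x, IsProbabilityMeasure (ρ x) := fun x => (hρ x).prob
  have hm : ∀ g : EN N → ℝ, Measurable g → (∃ M, ∀ y, |g y| ≤ M) →
      Measurable fun x => ∫ z, g (x + ε • z) ∂ρ x := fun g hg hb => mixM_meas hβ hν1 hν4 hε hg hb
  have hc' : ∀ (k : ℕ) (g : EN N → ℝ), Measurable g → (∃ M, ∀ y, |g y| ≤ M) →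
          (μ[(fun ω => g (X (k + 1) ω)) | 𝔉 k]) =ᵐ[μ]
            fun ω => ∫ z, g (X k ω + ε • z) ∂ρ (X k ω) := by
    intro k g hg hb
    refine (hc k g hg hb).trans (Filter.Eventually.of_forall fun ω => ?_)
    exact mixM_int hβ (hν1 _) hε _ hg hb
  obtain ⟨u, hum, hu0, hu1, huA, hsup, hlim⟩ := uS_lim hA hD hρ1 hm
  have hbD : ball (0 : EN N) (5 * Real.sqrt N) ⊆ D := by
    intro y hy i
    rw [mem_ball_zero_iff] at hy
    have : |y i| ≤ ‖y‖ := by simpa using PiLp.norm_apply_le y i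
    linarith
  have hcQ : cubeO N 1 ⊆ Q0 N := by
    intro y hy
    refine mem_Q0.2 fun i => ?_
    have := abs_lt.1 (hy i)
    exact ⟨by linarith [this.1], this.2⟩
  have hvt : volume A ≠ ∞ := by
    refine ne_top_of_le_ne_top (b := 1) (by simp) ?_
    rw [← vol_Q0 N]
    exact measure_mono (hAQ.trans hcQ)
  have ha : 0 < (volume A).toReal := ENNReal.toReal_pos hA0.ne' hvt
  have hux : sSup (F (volume A).toReal) ≤ u x := by
    refine csSup_le (hFne _ ha) fun c hc => ?_
    exact hc.2.2 ε hε hεε ρ hρ u hum hu0 ⟨1, hu1⟩ (fun y hy => hsup y (hbD hy)) A hA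
      (hAQ.trans hcQ) (ENNReal.ofReal_toReal hvt).le huA x (hcQ hx)
  have hev : u x ≤ μ.real (evS X A D) := by
    refine le_of_tendsto' (hlim x) fun n => ?_
    have h := proc_bound hA hD hρ1 hm hX hc' n 0
    have h0 : stS X A D 0 = Set.univ := by ext ω; simp [stS]
    rw [h0, Set.univ_inter, setIntegral_univ] at h
    have e : ∫ ω, uS ε ρ A D n (X 0 ω) ∂μ = uS ε ρ A D n x := by
      rw [integral_congr_ae (g := fun _ => uS ε ρ A D n x)]
      · simp
      · filter_upwards [hX0] with ω hω
        rw [hω]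
    rwa [e] at h
  have hs := hpos _ ha
  show ENNReal.ofReal (sSup (F (volume A).toReal) / 2) < μ (evS X A D)
  rw [ENNReal.ofReal_lt_iff_lt_toReal (by positivity) (measure_ne_top _ _)]
  change _ < μ.real (evS X A D)
  linarith
end
end

section
/- Let O : (0,∞) → [0,∞) be nondecreasing, let λ ∈ (0,1), k > 1 with λk² > 1, let ξ > 0 and K ≥ 0, and assume that O(s) ≤ λ O(ks) + K s² for every s > ξ. Then, with γ = log(1/λ)/log k, for all ρ and R with R ≥ ρ > ξ one has O(ρ) ≤ (1/λ) (ρ/R)^γ ( O(R) + K R² / (λk² − 1) ). -/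
/-- iteration lemma. If `O` is nondecreasing on `(0,∞)` and
`O(s) ≤ λ O(ks) + K s²` for all `s > ξ`, with `λ ∈ (0,1)`, `k > 1`, `λk² > 1`, then
`O(ρ) ≤ (1/λ)(ρ/R)^γ (O(R) + K R²/(λk² − 1))` for `R ≥ ρ > ξ`,
where `γ = log(1/λ)/log k`. -/
theorem iteration_lemma (O : ℝ → ℝ) (hOnn : ∀ s, 0 < s → 0 ≤ O s)
    (hOmono : ∀ s t, 0 < s → s ≤ t → O s ≤ O t)
    (lam k ξ K : ℝ) (hlam : lam ∈ Set.Ioo (0 : ℝ) 1) (hk : 1 < k)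
    (hlamk : 1 < lam * k ^ 2) (hξ : 0 < ξ) (hK : 0 ≤ K)
    (hrec : ∀ s, ξ < s → O s ≤ lam * O (k * s) + K * s ^ 2) :
    ∀ ρ R : ℝ, ξ < ρ → ρ ≤ R →
      O ρ ≤ (1 / lam) * (ρ / R) ^ (Real.log (1 / lam) / Real.log k) *
        (O R + K * R ^ 2 / (lam * k ^ 2 - 1)) := by
  intro ρ R hρ hR
  obtain ⟨hl0, hl1⟩ := hlam
  have hρ0 : 0 < ρ := hξ.trans hρ
  have hR0 : 0 < R := hρ0.trans_le hR
  have hk0 : 0 < k := by linarith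
  have hd : 0 < lam * k ^ 2 - 1 := by linarith
  obtain ⟨c, hc⟩ : ∃ c, c = K / (lam * k ^ 2 - 1) := ⟨_, rfl⟩
  have hc0 : 0 ≤ c := by rw [hc]; positivity
  have hcK : c * (lam * k ^ 2 - 1) = K := by rw [hc]; field_simp
  have hcR : K * R ^ 2 / (lam * k ^ 2 - 1) = c * R ^ 2 := by rw [hc]; ring
  rw [hcR]
  have key : ∀ n : ℕ, O ρ + c * ρ ^ 2 ≤ lam ^ n * (O (k ^ n * ρ) + c * (k ^ n * ρ) ^ 2) := by
    intro n
    induction n with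
    | zero => simp
    | succ n ih =>
      have h1 : 1 ≤ k ^ n := one_le_pow₀ hk.le
      have h2 : ξ < k ^ n * ρ := by nlinarith
      have h3 := hrec _ h2
      have h4 : k * (k ^ n * ρ) = k ^ (n + 1) * ρ := by ring
      rw [h4] at h3
      have h5 : O (k ^ n * ρ) + c * (k ^ n * ρ) ^ 2
          ≤ lam * (O (k ^ (n + 1) * ρ) + c * (k ^ (n + 1) * ρ) ^ 2) := by
        rw [← hcK] at h3
        rw [← h4] at h3 ⊢
        linarith
      calc _ ≤ _ := ih
        _ ≤ lam ^ n * (lam * (O (k ^ (n + 1) * ρ) + c * (k ^ (n + 1) * ρ) ^ 2)) :=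
          mul_le_mul_of_nonneg_left h5 (by positivity)
        _ = _ := by ring
  obtain ⟨n, hn1, hn2⟩ := exists_nat_pow_near ((one_le_div hρ0).2 hR) hk
  rw [le_div_iff₀ hρ0] at hn1
  rw [div_lt_iff₀ hρ0] at hn2
  have hlogk : 0 < Real.log k := Real.log_pos hk
  have hg : 0 ≤ Real.log (1 / lam) / Real.log k :=
    div_nonneg (Real.log_nonneg (by rw [le_div_iff₀ hl0]; linarith)) hlogk.le
  have hpow : lam ^ (n + 1) ≤ (ρ / R) ^ (Real.log (1 / lam) / Real.log k) := by
    have e : lam ^ (n + 1) = ((k ^ (n + 1))⁻¹) ^ (Real.log (1 / lam) / Real.log k) := by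
      rw [Real.rpow_def_of_pos (by positivity), Real.log_inv, Real.log_pow, one_div, Real.log_inv]
      rw [← Real.rpow_natCast, Real.rpow_def_of_pos hl0]
      congr 1
      field_simp
    rw [e]
    apply Real.rpow_le_rpow (by positivity) _ hg
    rw [le_div_iff₀ hR0, inv_mul_le_iff₀ (by positivity)]
    exact hn2.le
  have hkn : 0 < k ^ n * ρ := by positivity
  have hP : O (k ^ n * ρ) + c * (k ^ n * ρ) ^ 2 ≤ O R + c * R ^ 2 := by
    have := hOmono _ _ hkn hn1
    gcongr
  have hPR : 0 ≤ O R + c * R ^ 2 := add_nonneg (hOnn R hR0) (by positivity)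
  have hln : lam ^ n ≤ 1 / lam * (ρ / R) ^ (Real.log (1 / lam) / Real.log k) := by
    rw [one_div_mul_eq_div, le_div_iff₀ hl0, ← pow_succ]
    exact hpow
  calc O ρ ≤ O ρ + c * ρ ^ 2 := le_add_of_nonneg_right (by positivity)
    _ ≤ _ := key n
    _ ≤ lam ^ n * (O R + c * R ^ 2) := mul_le_mul_of_nonneg_left hP (by positivity)
    _ ≤ _ := mul_le_mul_of_nonneg_right hln hPR
end
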